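/- arXiv:1008.0287 — 3 statements merged into one kernel-verified Lean document; each statement's English description precedes it below -/
import Mathlib

section
/- Injectivity of the Klain map: let 0 ≤ i ≤ n and let φ ∈ Val(ℝⁿ) be even (φ(−K) = φ(K)) and homogeneous of degree i. Suppose that φ(K) = 0 for every K ∈ K(ℝⁿ) that is contained in some i-dimensional linear subspace of ℝⁿ. Then φ = 0. -/
/-!
The proof is by induction on the dimension, for all finite dimensional real inner product spaces
at once (`klainInjective`). If the degree `i` is the full dimension or zero, there is nothing to
do: every body lies in the whole space, and `φ K = φ (0 • K)` for `i = 0`. Otherwise: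

* Restricting `φ` to a hyperplane `u^⊥` and applying the induction hypothesis shows that `φ` is
  simple, i.e. vanishes on bodies contained in affine hyperplanes (`simple_of_klain`).
* For `L ⊆ u^⊥`, simplicity makes the map `t ↦ φ (L + [0, t u])` additive, hence linear. So
  `L ↦ φ (L + [0, u])` is an even valuation on `u^⊥`, homogeneous of degree `i - 1`, with zero
  Klain function. By induction, `φ` vanishes on right prisms (`prism_of_klain`).
* For any body `L` and any segment, `φ (L + [0, t u])` is affine in `t`. Cutting a long prism
  perpendicularly to `u` shows that lengthening it only inserts right prisms, so the slope is
  zero: adding a segment does not change `φ` (`neut_seg`). Say that segments are *neutral*.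
* By continuity zonoids, the limits of sums of segments, are neutral (`neut_zonoid`), and so is
  every body `T` with `T + Z = Z'` for zonoids `Z` and `Z'`. Such bodies are dense among the
  symmetric ones (`exists_mollified`): after a mollification preserving sublinearity, an even
  support function has the form `∫ K (ω u) / ω² dω` with an even test function `K` vanishing at
  the origin, and Fourier inversion together with `∫ (1 - cos (ω s)) / ω² dω = c |s|` makes it the
  cosine transform of a signed density. Hence all symmetric bodies are neutral (`neut_symm`).
* Finally, for an arbitrary body `A` let `C = conv (A ∪ -A)`. The bodies `A + C` and `-A + C` have
  union `2C` and a symmetric intersection, and `φ` vanishes on symmetric bodies, being neutral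
  summands of the null body `{0}`. Therefore `0 = φ (A + C) + φ (-A + C) = 2 φ A`, where evenness
  and the neutrality of `C` are used (`eq_zero_of_neut`).
-/

open scoped NNReal Pointwise
open Metric MeasureTheory

/-- The singleton convex body `{x}`. -/
def ConvexBody.singletonBody {V : Type*} [NormedAddCommGroup V] [NormedSpace ℝ V] (x : V) :
    ConvexBody V :=
  ⟨{x}, convex_singleton x, isCompact_singleton, Set.singleton_nonempty x⟩

/-- `φ` satisfies the valuation property: `φ(A ∪ B) = φ(A) + φ(B) - φ(A ∩ B)` whenever
`A`, `B` and `A ∪ B` are convex bodies. -/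
def IsValuation {V : Type*} [NormedAddCommGroup V] [NormedSpace ℝ V]
    (φ : ConvexBody V → ℂ) : Prop :=
  ∀ A B C D : ConvexBody V, (C : Set V) = (A : Set V) ∪ (B : Set V) →
    (D : Set V) = (A : Set V) ∩ (B : Set V) → φ C = φ A + φ B - φ D

/-- `φ` is translation invariant. -/
def IsTranslationInvariant {V : Type*} [NormedAddCommGroup V] [NormedSpace ℝ V]
    (φ : ConvexBody V → ℂ) : Prop :=
  ∀ (K : ConvexBody V) (x : V), φ (K + ConvexBody.singletonBody x) = φ K

/-- `φ ∈ Val(V)`: a translation invariant valuation, continuous in the Hausdorff metric. -/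
def MemVal {V : Type*} [NormedAddCommGroup V] [NormedSpace ℝ V]
    (φ : ConvexBody V → ℂ) : Prop :=
  IsValuation φ ∧ IsTranslationInvariant φ ∧ Continuous φ

/-- `φ` is homogeneous of degree `i`: `φ (λ • K) = λ ^ i * φ K` for all `λ ≥ 0`. -/
def IsHomogeneousVal {V : Type*} [NormedAddCommGroup V] [NormedSpace ℝ V]
    (φ : ConvexBody V → ℂ) (i : ℕ) : Prop :=
  ∀ (c : ℝ≥0) (K : ConvexBody V), φ (c • K) = ((c : ℝ) : ℂ) ^ i * φ K

/-- The reflection `-K` of a convex body. -/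
def ConvexBody.negBody {V : Type*} [NormedAddCommGroup V] [NormedSpace ℝ V]
    (K : ConvexBody V) : ConvexBody V :=
  ⟨-(K : Set V), K.convex.neg, K.isCompact.neg, K.nonempty.neg⟩

namespace Klain

variable {E : Type} [NormedAddCommGroup E] [InnerProductSpace ℝ E]

/-! ### Support functions -/

/-- The support function `h_K(u) = max_{x ∈ K} ⟪u, x⟫` of a convex body. -/
noncomputable def supp (K : ConvexBody E) (u : E) : ℝ :=
  sSup ((fun x => inner ℝ u x) '' (K : Set E))

lemma supp_isGreatest (K : ConvexBody E) (u : E) :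
    IsGreatest ((fun x => inner ℝ u x) '' (K : Set E)) (supp K u) :=
  (K.isCompact.image (by fun_prop)).isGreatest_sSup (K.nonempty.image _)

lemma inner_le_supp (K : ConvexBody E) (u : E) {x : E} (hx : x ∈ (K : Set E)) :
    inner ℝ u x ≤ supp K u :=
  (supp_isGreatest K u).2 ⟨x, hx, rfl⟩

lemma exists_supp (K : ConvexBody E) (u : E) : ∃ x ∈ (K : Set E), inner ℝ u x = supp K u :=
  (supp_isGreatest K u).1

lemma supp_le (K : ConvexBody E) (u : E) {c : ℝ} (h : ∀ x ∈ (K : Set E), inner ℝ u x ≤ c) :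
    supp K u ≤ c := by
  obtain ⟨x, hx, h'⟩ := exists_supp K u
  exact h' ▸ h x hx

lemma supp_eq (K : ConvexBody E) (u : E) {c : ℝ} (h : ∀ x ∈ (K : Set E), inner ℝ u x ≤ c)
    (h' : ∃ x ∈ (K : Set E), inner ℝ u x = c) : supp K u = c := by
  obtain ⟨x, hx, rfl⟩ := h'
  exact le_antisymm (supp_le K u h) (inner_le_supp K u hx)

lemma supp_add (K L : ConvexBody E) (u : E) : supp (K + L) u = supp K u + supp L u := by
  apply supp_eq
  · rintro _ ⟨x, hx, y, hy, rfl⟩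
    simp only [inner_add_right]
    exact add_le_add (inner_le_supp K u hx) (inner_le_supp L u hy)
  · obtain ⟨x, hx, h⟩ := exists_supp K u
    obtain ⟨y, hy, h'⟩ := exists_supp L u
    exact ⟨x + y, ⟨x, hx, y, hy, rfl⟩, by rw [inner_add_right, h, h']⟩

lemma supp_zero (u : E) : supp (0 : ConvexBody E) u = 0 := by
  apply supp_eq
  · rintro x hx
    rw [ConvexBody.coe_zero] at hx
    simp [Set.mem_zero.1 hx]
  · exact ⟨0, by simp, by simp⟩

lemma supp_subadd (K : ConvexBody E) (u v : E) : supp K (u + v) ≤ supp K u + supp K v := by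
  refine supp_le _ _ fun x hx => ?_
  rw [inner_add_left]
  exact add_le_add (inner_le_supp K u hx) (inner_le_supp K v hx)

lemma supp_smul (K : ConvexBody E) {c : ℝ} (hc : 0 ≤ c) (u : E) :
    supp K (c • u) = c * supp K u := by
  apply supp_eq
  · intro x hx
    rw [real_inner_smul_left]
    exact mul_le_mul_of_nonneg_left (inner_le_supp K u hx) hc
  · obtain ⟨x, hx, h⟩ := exists_supp K u
    exact ⟨x, hx, by rw [real_inner_smul_left, h]⟩

lemma supp_neg_of_symm (K : ConvexBody E) (hK : -(K : Set E) = K) (u : E) :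
    supp K (-u) = supp K u := by
  apply supp_eq
  · intro x hx
    rw [inner_neg_left, ← inner_neg_right]
    exact inner_le_supp K u (by rw [← hK]; simpa using hx)
  · obtain ⟨x, hx, h⟩ := exists_supp K u
    exact ⟨-x, by rw [← hK]; simpa using hx, by simpa using h⟩

lemma exists_supp_bound (K : ConvexBody E) : ∃ R, 0 < R ∧ ∀ u, |supp K u| ≤ R * ‖u‖ := by
  obtain ⟨R, hR, h⟩ := K.isBounded.exists_pos_norm_le
  refine ⟨R, hR, fun u => ?_⟩
  obtain ⟨x, hx, h'⟩ := exists_supp K u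
  rw [← h', mul_comm]
  exact (abs_real_inner_le_norm u x).trans (by gcongr; exact h x hx)

lemma supp_sub_le (K : ConvexBody E) {R : ℝ} (hR : ∀ u, |supp K u| ≤ R * ‖u‖) (u v : E) :
    |supp K u - supp K v| ≤ R * ‖u - v‖ := by
  rw [abs_le]
  have h1 := supp_subadd K (u - v) v
  have h2 := supp_subadd K (v - u) u
  rw [sub_add_cancel] at h1 h2
  have h3 := (abs_le.1 (hR (u - v))).2
  have h4 := (abs_le.1 (hR (v - u))).2
  rw [norm_sub_rev] at h4
  constructor <;> linarith

lemma supp_continuous (K : ConvexBody E) : Continuous (supp K) := by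
  obtain ⟨R, hR, h⟩ := exists_supp_bound K
  have : LipschitzWith ⟨R, hR.le⟩ (supp K) :=
    LipschitzWith.of_dist_le_mul fun u v => by
      rw [Real.dist_eq, dist_eq_norm]; exact supp_sub_le K h u v
  exact this.continuous

/-- Comparison of support functions gives the one-sided Hausdorff estimate, by looking in the
direction from `x` to its nearest point of `L`. -/
lemma exists_near (K L : ConvexBody E) {ε : ℝ} (hε : 0 ≤ ε)
    (h : ∀ u, supp K u ≤ supp L u + ε * ‖u‖)
    {x : E} (hx : x ∈ (K : Set E)) : ∃ y ∈ (L : Set E), dist x y ≤ ε := by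
  obtain ⟨y, hy, hxy⟩ := exists_norm_eq_iInf_of_complete_convex L.nonempty
    L.isCompact.isComplete L.convex x
  rw [norm_eq_iInf_iff_real_inner_le_zero L.convex hy] at hxy
  refine ⟨y, hy, ?_⟩
  have h1 : supp L (x - y) ≤ inner ℝ (x - y) y := by
    refine supp_le _ _ fun w hw => ?_
    have := hxy w hw
    rw [inner_sub_right] at this
    linarith
  have h2 := inner_le_supp K (x - y) hx
  have h3 := h (x - y)
  have h4 : inner ℝ (x - y) x - inner ℝ (x - y) y = ‖x - y‖ * ‖x - y‖ := by
    rw [← inner_sub_right, real_inner_self_eq_norm_mul_norm]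
  rw [dist_eq_norm]
  by_contra! h5
  nlinarith [norm_nonneg (x - y)]

lemma dist_le_of_supp (K L : ConvexBody E) {ε : ℝ} (hε : 0 ≤ ε)
    (h : ∀ u, |supp K u - supp L u| ≤ ε * ‖u‖) : dist K L ≤ ε := by
  rw [← ConvexBody.hausdorffDist_coe]
  refine Metric.hausdorffDist_le_of_mem_dist hε
    (fun x hx => exists_near K L hε (fun u => ?_) hx)
    (fun x hx => exists_near L K hε (fun u => ?_) hx)
  · linarith [(abs_le.1 (h u)).2]
  · linarith [(abs_le.1 (h u)).1]

lemma eq_of_supp (K L : ConvexBody E) (h : ∀ u, supp K u = supp L u) : K = L :=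
  dist_le_zero.1 (dist_le_of_supp K L le_rfl fun u => by simp [h u])

/-- Every finite sublinear function is a support function (Hahn–Banach). -/
lemma exists_body [FiniteDimensional ℝ E] (p : E → ℝ) {R : ℝ} (hR : ∀ u, p u ≤ R * ‖u‖)
    (hsmul : ∀ c : ℝ, 0 < c → ∀ x, p (c • x) = c * p x)
    (hadd : ∀ x y, p (x + y) ≤ p x + p y) :
    ∃ K : ConvexBody E, ∀ u, supp K u = p u := by
  have hp0 : p 0 = 0 := by
    have := hsmul 2 two_pos 0
    rw [smul_zero] at this
    linarith
  -- a supporting linear functional in each direction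
  have key : ∀ u, ∃ y : E, (∀ v, inner ℝ v y ≤ p v) ∧ inner ℝ u y = p u := by
    intro u
    have hneg : ∀ v, -p (-v) ≤ p v := fun v => by
      have := hadd v (-v)
      rw [add_neg_cancel, hp0] at this
      linarith
    obtain ⟨g, hg1, hg2⟩ : ∃ g : E →ₗ[ℝ] ℝ, g u = p u ∧ ∀ x, g x ≤ p x := by
      by_cases hu : u = 0
      · subst hu
        obtain ⟨g, -, hg⟩ := exists_extension_of_le_sublinear (⟨⊥, 0⟩ : E →ₗ.[ℝ] ℝ) p hsmul hadd
          (by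
            rintro ⟨x, hx⟩
            have hx' : x = 0 := (Submodule.mem_bot ℝ).1 hx
            subst hx'
            simp [hp0])
        exact ⟨g, by simp [hp0], hg⟩
      · obtain ⟨g, hg1, hg⟩ := exists_extension_of_le_sublinear
          (LinearPMap.mkSpanSingleton u (p u) hu) p hsmul hadd
          (by
            rintro ⟨x, hx⟩
            obtain ⟨c, rfl⟩ := Submodule.mem_span_singleton.1 hx
            rw [LinearPMap.mkSpanSingleton'_apply]
            rcases lt_trichotomy c 0 with hc | hc | hc
            · have h1 := hsmul (-c) (by linarith) (-u)
              rw [smul_neg, neg_smul, neg_neg] at h1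
              have h2 := hneg u
              simp only [smul_eq_mul, RingHom.id_apply]
              rw [h1]
              nlinarith
            · subst hc; simp [hp0]
            · simp [hsmul c hc u])
        refine ⟨g, ?_, hg⟩
        have h1 := hg1 ⟨u, Submodule.mem_span_singleton_self u⟩
        rw [h1]
        exact LinearPMap.mkSpanSingleton'_apply_self _ _ _ _
    refine ⟨(InnerProductSpace.toDual ℝ E).symm (LinearMap.toContinuousLinearMap g), ?_, ?_⟩
    · intro v
      rw [real_inner_comm, InnerProductSpace.toDual_symm_apply]
      exact hg2 v
    · rw [real_inner_comm, InnerProductSpace.toDual_symm_apply]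
      exact hg1
  let S : Set E := {y | ∀ v, inner ℝ v y ≤ p v}
  have hconv : Convex ℝ S := by
    intro x hx y hy a b ha hb hab v
    rw [inner_add_right, real_inner_smul_right, real_inner_smul_right]
    calc a * inner ℝ v x + b * inner ℝ v y ≤ a * p v + b * p v := by
          gcongr
          · exact hx v
          · exact hy v
      _ = p v := by rw [← add_mul, hab, one_mul]
  have hclosed : IsClosed S := by
    simp only [S, Set.ofPred_forall]
    exact isClosed_iInter fun v => isClosed_le (by fun_prop) (by fun_prop)
  have hbdd : S ⊆ Metric.closedBall 0 |R| := by
    intro y hy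
    rw [mem_closedBall_zero_iff]
    have h1 := (hy y).trans (hR y)
    rw [real_inner_self_eq_norm_mul_norm] at h1
    by_contra! h2
    nlinarith [norm_nonneg y, le_abs_self R, abs_nonneg R]
  have hcomp : IsCompact S := (isCompact_closedBall 0 |R|).of_isClosed_subset hclosed hbdd
  refine ⟨⟨S, hconv, hcomp, ?_⟩, fun u => ?_⟩
  · obtain ⟨y, hy, -⟩ := key 0
    exact ⟨y, hy⟩
  · refine supp_eq _ _ (fun x hx => hx u) ?_
    obtain ⟨y, hy, h⟩ := key u
    exact ⟨y, hy, h⟩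

/-! ### The cosine transform -/

/-- `∫ (1 - cos (ω s)) / ω² dω = c |s|` for a positive constant `c`. -/
lemma exists_abs_integral : ∃ c : ℝ, 0 < c ∧ ∀ s : ℝ,
    Integrable (fun ω : ℝ => (1 - Real.cos (ω * s)) / ω ^ 2) ∧
    ∫ ω : ℝ, (1 - Real.cos (ω * s)) / ω ^ 2 = c * |s| := by
  let g : ℝ → ℝ := fun ω => (1 - Real.cos ω) / ω ^ 2
  have hg0 : ∀ ω, 0 ≤ g ω := fun ω =>
    div_nonneg (by linarith [Real.cos_le_one ω]) (sq_nonneg _)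
  have hgi : Integrable g := by
    refine (integrable_inv_one_add_sq.const_mul 4).mono' ?_ (ae_of_all _ fun ω => ?_)
    · exact (Measurable.div (by fun_prop) (by fun_prop)).aestronglyMeasurable
    · rw [Real.norm_of_nonneg (hg0 ω)]
      by_cases hω : ω = 0
      · simp [g, hω]
      have h2 : 0 < ω ^ 2 := by positivity
      rw [← div_eq_mul_inv, div_le_div_iff₀ h2 (by positivity)]
      have h3 := Real.one_sub_sq_div_two_le_cos (x := ω)
      have h4 := Real.neg_one_le_cos ω
      rcases le_total (ω ^ 2) 1 with h | h <;> nlinarith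
  have hpos : 0 < ∫ ω, g ω := by
    rw [integral_pos_iff_support_of_nonneg hg0 hgi]
    have : Set.Ioo (0 : ℝ) 1 ⊆ Function.support g := by
      intro ω hω
      have h1 : Real.cos ω < 1 := by
        rw [← Real.cos_zero]
        exact Real.cos_lt_cos_of_nonneg_of_le_pi le_rfl
          (by linarith [hω.2, Real.pi_gt_three]) hω.1
      exact (div_pos (by linarith) (pow_pos hω.1 2)).ne'
    refine lt_of_lt_of_le ?_ (measure_mono this)
    simp
  refine ⟨∫ ω, g ω, hpos, fun s => ?_⟩
  by_cases hs : s = 0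
  · simp [hs]
  have heq : (fun ω : ℝ => (1 - Real.cos (ω * s)) / ω ^ 2) = fun ω => s ^ 2 * g (ω * s) := by
    funext ω
    simp only [g]
    by_cases hω : ω = 0
    · simp [hω]
    · field_simp
  rw [heq]
  refine ⟨(hgi.comp_mul_right' hs).const_mul _, ?_⟩
  rw [integral_const_mul, Measure.integral_comp_mul_right, smul_eq_mul, abs_inv]
  have : |s| ≠ 0 := abs_ne_zero.2 hs
  rw [← sq_abs s]
  field_simp

section Cosine

variable [FiniteDimensional ℝ E] [MeasurableSpace E] [BorelSpace E]

open scoped FourierTransform in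
/-- Fourier inversion for even real test functions, in cosine form. -/
lemma exists_cos_inversion (K : E → ℝ) (hK : ContDiff ℝ (⊤ : ℕ∞) K) (hKc : HasCompactSupport K)
    (heven : ∀ x, K (-x) = K x) :
    ∃ r : E → ℝ, Continuous r ∧ Integrable r ∧ Integrable (fun x => ‖x‖ * r x) ∧
      ∀ ξ, ∫ x, Real.cos (2 * Real.pi * inner ℝ x ξ) * r x = K ξ := by
  have hKc' : HasCompactSupport (fun x => (K x : ℂ)) := hKc.comp_left (g := fun t : ℝ => (t : ℂ)) rfl
  have hK' : ContDiff ℝ (⊤ : ℕ∞) (fun x => (K x : ℂ)) := Complex.ofRealCLM.contDiff.comp hK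
  let F : SchwartzMap E ℂ := hKc'.toSchwartzMap hK'
  let f : SchwartzMap E ℂ := 𝓕 F
  let r : E → ℝ := fun x => (f x).re
  have hrc : Continuous r := Complex.continuous_re.comp f.continuous
  have hri : Integrable r := f.integrable.re
  have hri' : Integrable (fun x => ‖x‖ * r x) := by
    have h1 := f.integrable_pow_mul volume 1
    refine h1.mono' (by fun_prop) (ae_of_all _ fun x => ?_)
    rw [norm_mul, norm_norm, pow_one]
    gcongr
    exact Complex.abs_re_le_norm _
  have hinv : ∀ ξ, ∫ x, Real.cos (2 * Real.pi * inner ℝ x ξ) * r x = K ξ := by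
    have h1 : ∀ ξ, (K ξ : ℂ) = ∫ x, Real.fourierChar (inner ℝ x ξ) • f x := by
      intro ξ
      have h2 : 𝓕⁻ f = F := FourierTransform.fourierInv_fourier_eq F
      have h3 : (𝓕⁻ f) ξ = (K ξ : ℂ) := by rw [h2]; rfl
      rw [← h3, SchwartzMap.fourierInv_coe, Real.fourierInv_eq]
    have hintegr : ∀ ξ, Integrable (fun x => Real.fourierChar (inner ℝ x ξ) • f x) := by
      intro ξ
      refine f.integrable.norm.mono' ?_ (ae_of_all _ fun x => by simp)
      refine Continuous.aestronglyMeasurable ?_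
      have := f.continuous
      have h5 : Continuous fun x : E => Real.fourierChar (inner ℝ x ξ) :=
        Real.continuous_fourierChar.comp (by fun_prop)
      exact h5.smul this
    intro ξ
    have h4 : ((2 * K ξ : ℝ) : ℂ) = ∫ x, (2 * Real.cos (2 * Real.pi * inner ℝ x ξ) : ℂ) * f x := by
      have : ((2 * K ξ : ℝ) : ℂ) = (K ξ : ℂ) + (K (-ξ) : ℂ) := by
        rw [heven]; push_cast; ring
      rw [this, h1 ξ, h1 (-ξ), ← integral_add (hintegr _) (hintegr _)]
      congr 1
      funext x
      rw [Circle.smul_def, Circle.smul_def, smul_eq_mul, smul_eq_mul, Real.fourierChar_apply,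
        Real.fourierChar_apply, ← add_mul, inner_neg_right]
      congr 1
      rw [Complex.ofReal_cos, Complex.two_cos]
      push_cast
      congr 2; ring
    have h6 : Integrable (fun x => (2 * Real.cos (2 * Real.pi * inner ℝ x ξ) : ℂ) * f x) := by
      refine (f.integrable.norm.const_mul 2).mono' ?_ (ae_of_all _ fun x => ?_)
      · have := f.continuous
        exact Continuous.aestronglyMeasurable (by fun_prop)
      · rw [norm_mul, norm_mul, Complex.norm_real, Complex.norm_ofNat]
        have := Real.abs_cos_le_one (2 * Real.pi * inner ℝ x ξ)
        rw [Real.norm_eq_abs]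
        nlinarith [norm_nonneg (f x)]
    have h7 := congrArg Complex.re h4
    rw [Complex.ofReal_re] at h7
    have h8 : (∫ x, (2 * Real.cos (2 * Real.pi * inner ℝ x ξ) : ℂ) * f x).re
        = ∫ x, 2 * (Real.cos (2 * Real.pi * inner ℝ x ξ) * r x) := by
      have h9 := integral_re h6
      simp only [RCLike.re_eq_complex_re] at h9
      rw [← h9]
      congr 1
      funext x
      have : (2 * Real.cos (2 * Real.pi * inner ℝ x ξ) : ℂ)
        = ((2 * Real.cos (2 * Real.pi * inner ℝ x ξ) : ℝ) : ℂ) := by push_cast; rfl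
      rw [this, Complex.re_ofReal_mul]
      ring
    rw [h8, integral_const_mul] at h7
    linarith
  exact ⟨r, hrc, hri, hri', hinv⟩

/-- A test function vanishing at the origin, radially integrated against `ω⁻²`, is a cosine
transform: integrate the inversion formula for `K` over the line `ℝ u`. -/
lemma exists_cosine_density (K : E → ℝ) (hK : ContDiff ℝ (⊤ : ℕ∞) K) (hKc : HasCompactSupport K)
    (heven : ∀ x, K (-x) = K x) (hK0 : K 0 = 0) :
    ∃ w : E → ℝ, Continuous w ∧ Integrable w ∧ Integrable (fun x => ‖x‖ * w x) ∧
      ∀ u, ∫ ω : ℝ, K (ω • u) / ω ^ 2 = ∫ x, |inner ℝ u x| * w x := by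
  obtain ⟨c, hc, hcos⟩ := exists_abs_integral
  obtain ⟨r, hrc, hri, hri', hinv⟩ := exists_cos_inversion K hK hKc heven
  refine ⟨fun x => -(c * (2 * Real.pi)) * r x, by fun_prop, hri.const_mul _, ?_, fun u => ?_⟩
  · refine (hri'.const_mul (-(c * (2 * Real.pi)))).congr (ae_of_all _ fun x => ?_)
    ring
  have habs : ∀ x, ∫ ω : ℝ, (1 - Real.cos (ω * (2 * Real.pi * inner ℝ x u))) / ω ^ 2
      = c * (2 * Real.pi) * |inner ℝ u x| := by
    intro x
    rw [(hcos _).2, abs_mul, abs_of_pos Real.two_pi_pos, real_inner_comm]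
    ring
  let G : ℝ × E → ℝ := fun q =>
    (1 - Real.cos (q.1 * (2 * Real.pi * inner ℝ q.2 u))) / q.1 ^ 2 * r q.2
  have hG : Integrable G (volume.prod volume) := by
    have hmeas : AEStronglyMeasurable G (volume.prod volume) := by
      refine Measurable.aestronglyMeasurable ?_
      have h1 : Measurable fun q : ℝ × E => r q.2 := hrc.measurable.comp measurable_snd
      have h2 : Continuous fun x : E => inner ℝ x u := by fun_prop
      have h3 : Measurable fun q : ℝ × E => inner ℝ q.2 u := h2.measurable.comp measurable_snd
      have h4 : Measurable fun q : ℝ × E => q.1 * (2 * Real.pi * inner ℝ q.2 u) :=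
        measurable_fst.mul (h3.const_mul _)
      have h5 : Measurable fun q : ℝ × E => q.1 ^ 2 := measurable_fst.pow_const 2
      exact (((Real.measurable_cos.comp h4).const_sub 1).div h5).mul h1
    rw [integrable_prod_iff' hmeas]
    refine ⟨ae_of_all _ fun x => ?_, ?_⟩
    · exact (hcos (2 * Real.pi * inner ℝ x u)).1.mul_const (r x)
    have : (fun x => ∫ ω : ℝ, ‖G (ω, x)‖)
        = fun x => c * (2 * Real.pi) * (|inner ℝ u x| * |r x|) := by
      funext x
      have h1 : ∀ ω : ℝ, ‖G (ω, x)‖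
          = (1 - Real.cos (ω * (2 * Real.pi * inner ℝ x u))) / ω ^ 2 * |r x| := by
        intro ω
        rw [norm_mul, Real.norm_eq_abs, Real.norm_eq_abs, abs_of_nonneg]
        exact div_nonneg (by linarith [Real.cos_le_one (ω * (2 * Real.pi * inner ℝ x u))])
          (sq_nonneg _)
      simp_rw [h1]
      rw [integral_mul_const, habs]
      ring
    rw [this]
    refine Integrable.const_mul ?_ _
    refine (hri'.norm.const_mul ‖u‖).mono' (by fun_prop) (ae_of_all _ fun x => ?_)
    rw [norm_mul, norm_mul, norm_norm, Real.norm_eq_abs, Real.norm_eq_abs, Real.norm_eq_abs,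
      abs_abs, abs_abs, ← mul_assoc]
    gcongr
    exact abs_real_inner_le_norm u x
  have hswap := integral_integral_swap (f := fun ω x => G (ω, x)) hG
  have hleft : ∀ ω : ℝ, ∫ x, G (ω, x) = -(K (ω • u) / ω ^ 2) := by
    intro ω
    have h1 : ∀ x, G (ω, x) = (ω ^ 2)⁻¹ *
        (Real.cos (2 * Real.pi * inner ℝ x (0 : E)) * r x
          - Real.cos (2 * Real.pi * inner ℝ x (ω • u)) * r x) := by
      intro x
      simp only [G, inner_zero_right, mul_zero, Real.cos_zero, real_inner_smul_right]
      rw [show 2 * Real.pi * (ω * inner ℝ x u) = ω * (2 * Real.pi * inner ℝ x u) by ring]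
      ring
    have hi : ∀ ξ : E, Integrable (fun x => Real.cos (2 * Real.pi * inner ℝ x ξ) * r x) := by
      intro ξ
      refine hri.norm.mono' (by fun_prop) (ae_of_all _ fun x => ?_)
      rw [norm_mul]
      exact mul_le_of_le_one_left (norm_nonneg _) (Real.abs_cos_le_one _)
    simp_rw [h1]
    rw [integral_const_mul, integral_sub (hi _) (hi _), hinv, hinv, hK0]
    ring
  simp_rw [hleft] at hswap
  rw [integral_neg] at hswap
  have hright : ∀ x, ∫ ω : ℝ, G (ω, x) = c * (2 * Real.pi) * (|inner ℝ u x| * r x) := by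
    intro x
    simp only [G]
    rw [integral_mul_const, habs]
    ring
  simp_rw [hright] at hswap
  rw [← neg_eq_iff_eq_neg.2 hswap.symm, ← integral_neg]
  congr 1
  funext x
  ring

end Cosine

/-! ### Approximation of symmetric bodies by generalized zonoids -/

/-- A smooth radial bump function on the Euclidean space `E × E`, supported in the unit ball. -/
noncomputable def kern (z : WithLp 2 (E × E)) : ℝ := Real.smoothTransition (1 - ‖z‖ ^ 2)

lemma kern_contDiff : ContDiff ℝ (⊤ : ℕ∞) (kern : WithLp 2 (E × E) → ℝ) :=
  Real.smoothTransition.contDiff.comp (contDiff_const.sub (contDiff_id.norm_sq ℝ))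

lemma kern_nonneg (z : WithLp 2 (E × E)) : 0 ≤ kern z := Real.smoothTransition.nonneg _

lemma kern_eq_zero {z : WithLp 2 (E × E)} (hz : 1 < ‖z‖) : kern z = 0 :=
  Real.smoothTransition.zero_of_nonpos (by nlinarith)

lemma kern_hasCompactSupport [FiniteDimensional ℝ E] :
    HasCompactSupport (kern : WithLp 2 (E × E) → ℝ) := by
  refine HasCompactSupport.intro (isCompact_closedBall 0 1) fun z hz => kern_eq_zero ?_
  simpa using hz

lemma norm_fst_le (z : WithLp 2 (E × E)) : ‖z.fst‖ ≤ ‖z‖ := by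
  have := WithLp.prod_norm_sq_eq_of_L2 z
  exact (pow_le_pow_iff_left₀ (norm_nonneg _) (norm_nonneg _) two_ne_zero).1
    (by nlinarith [sq_nonneg ‖z.snd‖])

lemma continuous_fst' : Continuous fun z : WithLp 2 (E × E) => z.fst :=
  (WithLp.fstL 2 ℝ E E).continuous

lemma continuous_snd' : Continuous fun z : WithLp 2 (E × E) => z.snd :=
  (WithLp.sndL 2 ℝ E E).continuous

section Mollify

variable [FiniteDimensional ℝ E] [MeasurableSpace E] [BorelSpace E]

lemma integrable_mul_kern {g : WithLp 2 (E × E) → ℝ} (hg : Continuous g) :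
    Integrable (fun z => g z * kern z) :=
  (hg.mul kern_contDiff.continuous).integrable_of_hasCompactSupport
    kern_hasCompactSupport.mul_left

lemma kern_integral_pos : 0 < ∫ z : WithLp 2 (E × E), kern z :=
  kern_contDiff.continuous.integral_pos_of_hasCompactSupport_nonneg_nonzero (x := 0)
    kern_hasCompactSupport kern_nonneg (by simp [kern])

/-- The support function of `S` mollified at scale `δ`. The kernel lives on `E × E` although only
the first coordinate enters: rotations of `E × E` are what makes `moll_subadd` work. -/
noncomputable def moll (S : ConvexBody E) (δ : ℝ) (ξ : E) : ℝ :=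
  ∫ z : WithLp 2 (E × E), supp S (ξ - δ • z.fst) * kern z

lemma moll_zero (S : ConvexBody E) (ξ : E) :
    moll S 0 ξ = supp S ξ * ∫ z : WithLp 2 (E × E), kern z := by
  simp [moll, integral_const_mul]

lemma integrable_moll (S : ConvexBody E) (α β : ℝ) (ξ : E) :
    Integrable fun z : WithLp 2 (E × E) => supp S (ξ - (α • z.fst + β • z.snd)) * kern z :=
  integrable_mul_kern ((supp_continuous S).comp (continuous_const.sub
    ((continuous_fst'.const_smul α).add (continuous_snd'.const_smul β))))

lemma integrable_moll' (S : ConvexBody E) (δ : ℝ) (ξ : E) :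
    Integrable fun z : WithLp 2 (E × E) => supp S (ξ - δ • z.fst) * kern z := by
  simpa using integrable_moll S δ 0 ξ

lemma moll_contDiff (S : ConvexBody E) {δ : ℝ} (hδ : δ ≠ 0) :
    ContDiff ℝ (⊤ : ℕ∞) (moll S δ) := by
  let f : WithLp 2 (E × E) → ℝ := fun y => supp S (δ • y.fst)
  have hf : Continuous f := (supp_continuous S).comp (continuous_fst'.const_smul δ)
  have h1 := kern_hasCompactSupport.contDiff_convolution_right (ContinuousLinearMap.mul ℝ ℝ)
    (hf.locallyIntegrable (μ := volume)) (kern_contDiff (E := E))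
  let J : E →ₗ[ℝ] WithLp 2 (E × E) :=
    (WithLp.linearEquiv 2 ℝ (E × E)).symm.toLinearMap ∘ₗ LinearMap.inl ℝ E E ∘ₗ
      (δ⁻¹ • LinearMap.id)
  have h2 : ContDiff ℝ (⊤ : ℕ∞) J := (LinearMap.toContinuousLinearMap J).contDiff
  have h3 : moll S δ = convolution f kern (ContinuousLinearMap.mul ℝ ℝ) volume ∘ J := by
    funext ξ
    rw [Function.comp_apply, convolution_eq_swap]
    refine integral_congr_ae (ae_of_all _ fun z => ?_)
    simp only [f, ContinuousLinearMap.mul_apply']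
    congr 2
    simp [J, smul_sub, smul_smul, hδ]
  rw [h3]
  exact h1.comp h2

lemma moll_neg (S : ConvexBody E) (hS : -(S : Set E) = S) (δ : ℝ) (ξ : E) :
    moll S δ (-ξ) = moll S δ ξ := by
  rw [moll, moll, ← integral_neg_eq_self]
  refine integral_congr_ae (ae_of_all _ fun z => ?_)
  simp only
  rw [← supp_neg_of_symm S hS]
  congr 1
  · congr 1
    simp
    abel
  · simp [kern]

lemma moll_smul (S : ConvexBody E) {c : ℝ} (hc : 0 ≤ c) (δ : ℝ) (ξ : E) :
    moll S (c * δ) (c • ξ) = c * moll S δ ξ := by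
  rw [moll, moll, ← integral_const_mul]
  refine integral_congr_ae (ae_of_all _ fun z => ?_)
  simp only
  rw [← mul_assoc, ← supp_smul S hc, smul_sub, smul_smul]

lemma moll_sub_le (S : ConvexBody E) {R : ℝ} (hR : 0 ≤ R) (hS : ∀ u, |supp S u| ≤ R * ‖u‖)
    (δ δ' : ℝ) (ξ ξ' : E) :
    |moll S δ ξ - moll S δ' ξ'|
      ≤ R * (‖ξ - ξ'‖ + |δ - δ'|) * ∫ z : WithLp 2 (E × E), kern z := by
  rw [moll, moll, ← integral_sub (integrable_moll' S δ ξ) (integrable_moll' S δ' ξ'),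
    ← integral_const_mul, ← Real.norm_eq_abs]
  refine norm_integral_le_of_norm_le
    ((kern_contDiff.continuous.integrable_of_hasCompactSupport kern_hasCompactSupport).const_mul _)
    (ae_of_all _ fun z => ?_)
  rw [← sub_mul, norm_mul, Real.norm_eq_abs, Real.norm_of_nonneg (kern_nonneg z)]
  by_cases hz : 1 < ‖z‖
  · simp [kern_eq_zero hz]
  refine mul_le_mul_of_nonneg_right ((supp_sub_le S hS _ _).trans ?_) (kern_nonneg z)
  gcongr
  have h1 : ξ - δ • z.fst - (ξ' - δ' • z.fst) = (ξ - ξ') - (δ - δ') • z.fst := by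
    rw [sub_smul]; abel
  rw [h1]
  refine (norm_sub_le _ _).trans ?_
  rw [norm_smul, Real.norm_eq_abs]
  gcongr
  exact mul_le_of_le_one_right (abs_nonneg _) ((norm_fst_le z).trans (not_lt.1 hz))

lemma moll_continuous (S : ConvexBody E) (δ : ℝ) : Continuous (moll S δ) := by
  by_cases hδ : δ = 0
  · subst hδ
    have : moll S 0 = fun ξ => supp S ξ * ∫ z : WithLp 2 (E × E), kern z :=
      funext (moll_zero S)
    rw [this]
    exact (supp_continuous S).mul_const _
  · exact (moll_contDiff S hδ).continuous

/-- Invariance of the kernel under the rotations mixing the two factors of `E × E`. -/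
lemma moll_rot (S : ConvexBody E) (α β r : ℝ) (hr : 0 ≤ r) (h : r ^ 2 = α ^ 2 + β ^ 2) (ξ : E) :
    ∫ z : WithLp 2 (E × E), supp S (ξ - (α • z.fst + β • z.snd)) * kern z = moll S r ξ := by
  by_cases hr0 : r = 0
  · have h1 : α = 0 := by nlinarith [sq_nonneg β, sq_nonneg α]
    have h2 : β = 0 := by nlinarith [sq_nonneg β, sq_nonneg α]
    simp [h1, h2, hr0, moll]
  let L : WithLp 2 (E × E) →ₗ[ℝ] WithLp 2 (E × E) :=
    { toFun := fun z => WithLp.toLp 2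
        ((α / r) • z.fst + (β / r) • z.snd, -(β / r) • z.fst + (α / r) • z.snd)
      map_add' := fun x y => by
        apply (WithLp.linearEquiv 2 ℝ (E × E)).injective
        ext <;> simp <;> module
      map_smul' := fun c x => by
        apply (WithLp.linearEquiv 2 ℝ (E × E)).injective
        ext <;> simp <;> module }
  have hLfst : ∀ z, (L z).fst = (α / r) • z.fst + (β / r) • z.snd := fun z => rfl
  have hLsnd : ∀ z, (L z).snd = -(β / r) • z.fst + (α / r) • z.snd := fun z => rfl
  have hab : (α / r) ^ 2 + (β / r) ^ 2 = 1 := by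
    field_simp
    linarith
  have hL : ∀ z, ‖L z‖ = ‖z‖ := by
    intro z
    rw [← sq_eq_sq₀ (norm_nonneg _) (norm_nonneg _), WithLp.prod_norm_sq_eq_of_L2,
      WithLp.prod_norm_sq_eq_of_L2, hLfst, hLsnd, norm_add_sq_real, norm_add_sq_real]
    simp only [norm_smul, real_inner_smul_left, real_inner_smul_right, mul_pow, norm_neg,
      Real.norm_eq_abs, sq_abs]
    linear_combination (‖z.fst‖ ^ 2 + ‖z.snd‖ ^ 2) * hab
  let Q : WithLp 2 (E × E) ≃ₗᵢ[ℝ] WithLp 2 (E × E) :=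
    LinearIsometry.toLinearIsometryEquiv ⟨L, hL⟩ rfl
  have hQ : ∀ z, Q z = L z := fun z => rfl
  have hmp := Q.measurePreserving
  have h3 := hmp.integral_comp Q.toHomeomorph.measurableEmbedding
    (fun z => supp S (ξ - r • z.fst) * kern z)
  rw [moll, ← h3]
  refine integral_congr_ae (ae_of_all _ fun z => ?_)
  simp only
  rw [hQ, hLfst, kern, kern, hL, smul_add, smul_smul, smul_smul, mul_div_cancel₀ _ hr0,
    mul_div_cancel₀ _ hr0]

/-- Mollification at a scale proportional to the norm preserves subadditivity. -/
lemma moll_subadd (S : ConvexBody E) {δ : ℝ} (hδ : 0 ≤ δ) (ω : ℝ) (u v : E) :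
    moll S (δ * ‖u + v‖) (ω • (u + v))
      ≤ moll S (δ * ‖u‖) (ω • u) + moll S (δ * ‖v‖) (ω • v) := by
  by_cases hu : u = 0
  · have h0 : supp S 0 = 0 := by simpa using supp_smul S le_rfl (0 : E)
    simp [hu, moll_zero, h0]
  -- `u` and `v` in the coordinates of their common plane: `(‖u‖, 0)` and `(c, d)`
  have hu' : ‖u‖ ≠ 0 := norm_ne_zero_iff.2 hu
  set c : ℝ := inner ℝ u v / ‖u‖ with hc
  have hcu : c * ‖u‖ = inner ℝ u v := by rw [hc]; field_simp
  have hcv : c ^ 2 ≤ ‖v‖ ^ 2 := by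
    rw [sq_le_sq, abs_norm, hc, abs_div, abs_norm, div_le_iff₀ (norm_pos_iff.2 hu), mul_comm]
    exact abs_real_inner_le_norm u v
  set d : ℝ := √(‖v‖ ^ 2 - c ^ 2) with hd
  have hd2 : d ^ 2 = ‖v‖ ^ 2 - c ^ 2 := Real.sq_sqrt (by linarith)
  have h1 := moll_rot S (δ * (‖u‖ + c)) (δ * d) (δ * ‖u + v‖) (by positivity)
    (by rw [mul_pow, mul_pow, mul_pow, norm_add_sq_real, hd2]; linear_combination
          (-2) * δ ^ 2 * hcu) (ω • (u + v))
  have h2 := moll_rot S (δ * c) (δ * d) (δ * ‖v‖) (by positivity)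
    (by rw [mul_pow, mul_pow, mul_pow, hd2]; ring) (ω • v)
  rw [← h1, ← h2, moll, ← integral_add (integrable_moll' S _ _) (integrable_moll S _ _ _)]
  refine integral_mono (integrable_moll S _ _ _)
    ((integrable_moll' S _ _).add (integrable_moll S _ _ _)) fun z => ?_
  simp only
  rw [← add_mul]
  refine mul_le_mul_of_nonneg_right ?_ (kern_nonneg z)
  refine le_trans (le_of_eq ?_) (supp_subadd S _ _)
  congr 1
  module

end Mollify

section Approx

variable [FiniteDimensional ℝ E] [MeasurableSpace E] [BorelSpace E]

/-- A smooth even cutoff on the line, supported in `[-1, 1]`. -/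
noncomputable def cut (ω : ℝ) : ℝ := Real.smoothTransition (1 - ω ^ 2)

lemma cut_continuous : Continuous cut :=
  Real.smoothTransition.continuous.comp (by fun_prop)

lemma cut_nonneg (ω : ℝ) : 0 ≤ cut ω := Real.smoothTransition.nonneg _

lemma cut_hasCompactSupport : HasCompactSupport cut := by
  refine HasCompactSupport.intro (isCompact_closedBall 0 1) fun ω hω => ?_
  have : 1 < |ω| := by simpa using hω
  exact Real.smoothTransition.zero_of_nonpos (by rw [← sq_abs]; nlinarith)

lemma integrable_cut_mul {g : ℝ → ℝ} (hg : Continuous g) : Integrable fun ω => cut ω * g ω :=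
  (cut_continuous.mul hg).integrable_of_hasCompactSupport cut_hasCompactSupport.mul_right

/-- Symmetric bodies are limits of bodies whose support function is the cosine transform of a
signed density. -/
lemma exists_mollified (S : ConvexBody E) (hS : -(S : Set E) = S) {ε : ℝ} (hε : 0 < ε) :
    ∃ (T : ConvexBody E) (w : E → ℝ), Continuous w ∧ Integrable w ∧
      Integrable (fun x => ‖x‖ * w x) ∧ (∀ u, supp T u = ∫ x, |inner ℝ u x| * w x) ∧
      ∀ u, |supp T u - supp S u| ≤ ε * ‖u‖ := by
  obtain ⟨R, hR, hRS⟩ := exists_supp_bound S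
  set κ := ∫ z : WithLp 2 (E × E), kern z with hκ
  have hκ0 : 0 < κ := kern_integral_pos
  set β := ∫ ω, cut ω * |ω| with hβ
  set β0 := ∫ ω, cut ω with hβ0
  have hβpos : 0 < β :=
    (cut_continuous.mul continuous_abs).integral_pos_of_hasCompactSupport_nonneg_nonzero
      (x := 1 / 2) cut_hasCompactSupport.mul_right
      (fun ω => mul_nonneg (cut_nonneg ω) (abs_nonneg ω))
      (mul_ne_zero (Real.smoothTransition.pos_of_pos (by norm_num)).ne' (by norm_num))
  have hβ0pos : 0 < β0 :=
    cut_continuous.integral_pos_of_hasCompactSupport_nonneg_nonzero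
      (x := 0) cut_hasCompactSupport cut_nonneg (by simp [cut])
  set δ := ε * β / (R * β0) with hδ
  have hδ0 : 0 < δ := by positivity
  have hcont : ∀ u : E, Continuous fun ω : ℝ => moll S (δ * ‖u‖) (ω • u) := fun u =>
    (moll_continuous S _).comp (by fun_prop)
  have hintegr : ∀ u : E, Integrable fun ω : ℝ => cut ω * moll S (δ * ‖u‖) (ω • u) :=
    fun u => integrable_cut_mul (hcont u)
  -- `p` is the averaged mollification of `h_S`. The scale proportional to `‖u‖` makes it sublinear,
  -- and on unit vectors it is a line integral of the test function `K` below.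
  let p : E → ℝ := fun u => ∫ ω : ℝ, cut ω * moll S (δ * ‖u‖) (ω • u)
  have hpadd : ∀ u v, p (u + v) ≤ p u + p v := by
    intro u v
    simp only [p]
    rw [← integral_add (hintegr u) (hintegr v)]
    refine integral_mono (hintegr _) ((hintegr u).add (hintegr v)) fun ω => ?_
    simp only
    rw [← mul_add]
    exact mul_le_mul_of_nonneg_left (moll_subadd S hδ0.le ω u v) (cut_nonneg ω)
  have hpsmul : ∀ c : ℝ, 0 < c → ∀ u, p (c • u) = c * p u := by
    intro c hc u
    simp only [p]
    rw [← integral_const_mul]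
    refine integral_congr_ae (ae_of_all _ fun ω => ?_)
    simp only
    rw [norm_smul, Real.norm_of_nonneg hc.le, smul_comm, mul_left_comm δ,
      moll_smul S hc.le]
    ring
  have hsupp : ∀ (ω : ℝ) (u : E), supp S (ω • u) = |ω| * supp S u := by
    intro ω u
    rcases abs_choice ω with h | h
    · rw [h, supp_smul S (by rw [← h]; exact abs_nonneg _)]
    · rw [h, ← supp_smul S (by rw [← h]; exact abs_nonneg _), neg_smul, supp_neg_of_symm S hS]
  have hpapprox : ∀ u, |p u - κ * β * supp S u| ≤ R * δ * ‖u‖ * κ * β0 := by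
    intro u
    have h1 : κ * β * supp S u = ∫ ω : ℝ, cut ω * moll S 0 (ω • u) := by
      rw [hβ, mul_right_comm, ← integral_const_mul]
      refine integral_congr_ae (ae_of_all _ fun ω => ?_)
      simp only
      rw [moll_zero, hsupp]
      ring
    have h3 : Integrable fun ω : ℝ => cut ω * moll S 0 (ω • u) :=
      integrable_cut_mul ((moll_continuous S 0).comp (continuous_id.smul continuous_const))
    have h4 : p u = ∫ ω : ℝ, cut ω * moll S (δ * ‖u‖) (ω • u) := rfl
    rw [h1, h4, ← integral_sub (hintegr u) h3, hβ0, ← integral_const_mul, ← Real.norm_eq_abs]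
    refine norm_integral_le_of_norm_le
      ((cut_continuous.integrable_of_hasCompactSupport cut_hasCompactSupport).const_mul _)
      (ae_of_all _ fun ω => ?_)
    rw [← mul_sub, norm_mul, Real.norm_of_nonneg (cut_nonneg ω), mul_comm]
    refine mul_le_mul_of_nonneg_right ?_ (cut_nonneg ω)
    have h2 := moll_sub_le S hR.le hRS (δ * ‖u‖) 0 (ω • u) (ω • u)
    rw [sub_self, norm_zero, zero_add, sub_zero, abs_of_nonneg (show 0 ≤ δ * ‖u‖ by positivity),
      ← hκ] at h2
    rw [Real.norm_eq_abs]
    linarith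
  have happrox : ∀ u, |p u / (κ * β) - supp S u| ≤ ε * ‖u‖ := by
    intro u
    have h1 : p u / (κ * β) - supp S u = (p u - κ * β * supp S u) / (κ * β) := by
      field_simp
    rw [h1, abs_div, abs_of_pos (show 0 < κ * β by positivity), div_le_iff₀ (by positivity)]
    refine (hpapprox u).trans (le_of_eq ?_)
    rw [hδ]
    field_simp
  obtain ⟨T, hT⟩ := exists_body (fun u => p u / (κ * β)) (R := ε + R)
    (fun u => by
      have h1 := (abs_le.1 (happrox u)).2
      have h2 := (abs_le.1 (hRS u)).2
      linarith)
    (fun c hc u => by rw [hpsmul c hc]; ring)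
    (fun u v => by
      rw [← add_div]
      have := hpadd u v
      gcongr)
  let K : E → ℝ := fun ξ => ‖ξ‖ ^ 2 * Real.smoothTransition (1 - ‖ξ‖ ^ 2) * moll S δ ξ
  obtain ⟨w, hw1, hw2, hw3, hw4⟩ := exists_cosine_density K
    (((contDiff_id.norm_sq ℝ).mul (Real.smoothTransition.contDiff.comp
      (contDiff_const.sub (contDiff_id.norm_sq ℝ)))).mul (moll_contDiff S hδ0.ne'))
    (by
      refine HasCompactSupport.intro (isCompact_closedBall 0 1) fun ξ hξ => ?_
      have : 1 < ‖ξ‖ := by simpa using hξ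
      simp only [K]
      rw [Real.smoothTransition.zero_of_nonpos (by nlinarith)]
      simp)
    (fun x => by simp only [K, norm_neg, moll_neg S hS])
    (by simp [K])
  have hunit : ∀ u : E, ‖u‖ = 1 → p u = ∫ x, |inner ℝ u x| * w x := by
    intro u hu
    rw [← hw4]
    refine integral_congr_ae ?_
    have h0 : ∀ᵐ ω : ℝ, ω ≠ 0 := by
      simp [ae_iff, measure_singleton]
    filter_upwards [h0] with ω hω
    simp only [K, norm_smul, hu, mul_one, Real.norm_eq_abs, sq_abs, cut]
    field_simp
  have hall : ∀ u : E, p u = ∫ x, |inner ℝ u x| * w x := by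
    intro u
    by_cases hu : u = 0
    · have h1 := (abs_le.1 (hpapprox 0))
      have h0 : supp S 0 = 0 := by simpa using supp_smul S le_rfl (0 : E)
      rw [h0, norm_zero] at h1
      simp only [hu, inner_zero_left, abs_zero, zero_mul, integral_zero]
      linarith [h1.1, h1.2]
    · have hu' : 0 < ‖u‖ := norm_pos_iff.2 hu
      have h1 : u = ‖u‖ • (‖u‖⁻¹ • u) := by rw [smul_smul, mul_inv_cancel₀ hu'.ne', one_smul]
      have h2 : ‖‖u‖⁻¹ • u‖ = 1 := by
        rw [norm_smul, norm_inv, norm_norm, inv_mul_cancel₀ hu'.ne']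
      conv_lhs => rw [h1]
      rw [hpsmul _ hu', hunit _ h2, ← integral_const_mul]
      refine integral_congr_ae (ae_of_all _ fun x => ?_)
      simp only
      rw [real_inner_smul_left, abs_mul, abs_of_pos (inv_pos.2 hu')]
      field_simp
  refine ⟨T, fun x => (κ * β)⁻¹ * w x, by fun_prop, hw2.const_mul _, ?_, fun u => ?_, fun u => ?_⟩
  · refine (hw3.const_mul (κ * β)⁻¹).congr (ae_of_all _ fun x => ?_)
    simp only
    ring
  · rw [hT, hall, div_eq_inv_mul, ← integral_const_mul]
    refine integral_congr_ae (ae_of_all _ fun x => ?_)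
    simp only
    ring
  · rw [hT]
    exact happrox u

end Approx

/-! ### Neutral summands -/

/-- The segment `[a, b]` as a convex body. -/
def seg (a b : E) : ConvexBody E :=
  ⟨segment ℝ a b, convex_segment a b,
    by rw [← convexHull_pair]; exact (Set.toFinite _).isCompact_convexHull (𝕜 := ℝ),
    ⟨a, left_mem_segment ℝ a b⟩⟩

lemma coe_seg (a b : E) : (seg a b : Set E) = segment ℝ a b := rfl

lemma supp_seg (x u : E) : supp (seg (-x) x) u = |inner ℝ u x| := by
  apply supp_eq
  · rintro _ ⟨a, b, ha, hb, hab, rfl⟩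
    rw [inner_add_right, real_inner_smul_right, real_inner_smul_right, inner_neg_right]
    have := le_abs_self (inner ℝ u x)
    have := neg_abs_le (inner ℝ u x)
    have : b = 1 - a := by linarith
    subst this
    nlinarith
  · rcases abs_choice (inner ℝ u x) with h | h
    · exact ⟨x, right_mem_segment ℝ _ _, h.symm⟩
    · exact ⟨-x, left_mem_segment ℝ _ _, by rw [inner_neg_right, h]⟩

/-- `S` is neutral for `φ` if adding `S` to a body never changes the value of `φ`. -/
def Neut (φ : ConvexBody E → ℂ) (S : ConvexBody E) : Prop := ∀ L, φ (L + S) = φ L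

lemma Neut.add {φ : ConvexBody E → ℂ} {S T : ConvexBody E} (hS : Neut φ S) (hT : Neut φ T) :
    Neut φ (S + T) := fun L => by rw [← add_assoc, hT, hS]

lemma neut_of_approx {φ : ConvexBody E → ℂ} (hφ : Continuous φ) {S : ConvexBody E}
    (h : ∀ ε : ℝ, 0 < ε → ∃ T, Neut φ T ∧ ∀ u, |supp T u - supp S u| ≤ ε * ‖u‖) : Neut φ S := by
  intro L
  rw [← dist_le_zero, dist_comm]
  refine le_of_forall_pos_le_add fun η hη => ?_
  obtain ⟨δ, hδ, hd⟩ := Metric.continuous_iff.1 hφ (L + S) η hη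
  obtain ⟨T, hT, hTS⟩ := h (δ / 2) (by positivity)
  have h1 : dist (L + T) (L + S) ≤ δ / 2 := by
    refine dist_le_of_supp _ _ (by positivity) fun u => ?_
    rw [supp_add, supp_add, add_sub_add_left_eq_sub]
    exact hTS u
  have h2 := hd (L + T) (by linarith)
  rw [hT] at h2
  linarith

section Zonoid

variable [FiniteDimensional ℝ E] [MeasurableSpace E] [BorelSpace E]

lemma integrable_abs_inner_mul {w : E → ℝ} (hw : Continuous w)
    (hw' : Integrable (fun x => ‖x‖ * w x)) (u : E) :
    Integrable (fun x => |inner ℝ u x| * w x) := by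
  refine (hw'.norm.const_mul ‖u‖).mono' (by fun_prop) (ae_of_all _ fun x => ?_)
  rw [norm_mul, norm_mul, norm_norm, Real.norm_eq_abs, abs_abs, ← mul_assoc]
  gcongr
  exact abs_real_inner_le_norm u x

lemma exists_zonoid {w : E → ℝ} (hw : Continuous w) (hw0 : ∀ x, 0 ≤ w x)
    (hw' : Integrable (fun x => ‖x‖ * w x)) :
    ∃ Z : ConvexBody E, ∀ u, supp Z u = ∫ x, |inner ℝ u x| * w x := by
  have hi := integrable_abs_inner_mul hw hw'
  refine exists_body (fun u => ∫ x, |inner ℝ u x| * w x) (R := ∫ x, ‖x‖ * w x) ?_ ?_ ?_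
  · intro u
    rw [mul_comm, ← integral_const_mul]
    refine integral_mono (hi u) (hw'.const_mul _) fun x => ?_
    simp only
    rw [← mul_assoc]
    exact mul_le_mul_of_nonneg_right (abs_real_inner_le_norm u x) (hw0 x)
  · intro c hc u
    rw [← integral_const_mul]
    refine integral_congr_ae (ae_of_all _ fun x => ?_)
    simp only
    rw [real_inner_smul_left, abs_mul, abs_of_pos hc, mul_assoc]
  · intro u v
    rw [← integral_add (hi u) (hi v)]
    refine integral_mono (hi _) ((hi u).add (hi v)) fun x => ?_
    simp only
    rw [← add_mul, inner_add_left]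
    exact mul_le_mul_of_nonneg_right (abs_add_le _ _) (hw0 x)

/-- Zonoids are limits of finite sums of segments, hence neutral as soon as segments are. -/
lemma neut_zonoid {φ : ConvexBody E → ℂ} (hφ : Continuous φ) (hseg : ∀ x, Neut φ (seg (-x) x))
    {w : E → ℝ} (hw : Continuous w) (hw0 : ∀ x, 0 ≤ w x) (hwi : Integrable w)
    (hw' : Integrable (fun x => ‖x‖ * w x)) (Z : ConvexBody E)
    (hZ : ∀ u, supp Z u = ∫ x, |inner ℝ u x| * w x) : Neut φ Z := by
  let wn : E → ℝ≥0 := fun x => ⟨w x, hw0 x⟩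
  have hwn : Measurable wn := (hw.subtype_mk _).measurable
  let μ : Measure E := volume.withDensity fun x => (wn x : ENNReal)
  have hμint : ∀ f : E → ℝ, ∫ x, f x ∂μ = ∫ x, f x * w x := by
    intro f
    rw [integral_withDensity_eq_integral_smul hwn]
    refine integral_congr_ae (ae_of_all _ fun x => ?_)
    exact mul_comm (w x) (f x)
  have hμi : ∀ f : E → ℝ, Integrable f μ ↔ Integrable fun x => f x * w x := by
    intro f
    rw [integrable_withDensity_iff_integrable_smul hwn]
    refine integrable_congr (ae_of_all _ fun x => ?_)
    exact mul_comm (w x) (f x)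
  have hfin : IsFiniteMeasure μ := by
    have : Integrable (fun _ : E => (1 : ℝ)) μ := by rw [hμi]; simpa using hwi
    rwa [integrable_const_iff_isFiniteMeasure one_ne_zero] at this
  have hid : MemLp (id : E → E) 1 μ := by
    rw [memLp_one_iff_integrable, ← integrable_norm_iff aestronglyMeasurable_id, hμi]
    exact hw'
  refine neut_of_approx hφ fun ε hε => ?_
  obtain ⟨g, hg, hgm⟩ := hid.exists_simpleFunc_eLpNorm_sub_lt ENNReal.one_ne_top
    (ε := ENNReal.ofReal ε) (by simpa using hε)
  have hgi : Integrable g μ := memLp_one_iff_integrable.1 hgm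
  have hidi : Integrable (id : E → E) μ := memLp_one_iff_integrable.1 hid
  have hfinset : ∀ s : Finset E, ∃ T, Neut φ T ∧
      ∀ u, supp T u = ∑ y ∈ s, μ.real (g ⁻¹' {y}) * |inner ℝ u y| := by
    classical
    intro s
    induction s using Finset.induction_on with
    | empty => exact ⟨0, fun L => by rw [add_zero], fun u => by rw [supp_zero]; simp⟩
    | insert y s hy ih =>
      obtain ⟨T, hT, hT'⟩ := ih
      refine ⟨_, (hseg (μ.real (g ⁻¹' {y}) • y)).add hT, fun u => ?_⟩
      rw [supp_add, supp_seg, hT', Finset.sum_insert hy, real_inner_smul_right, abs_mul,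
        abs_of_nonneg measureReal_nonneg]
  obtain ⟨T, hT, hT'⟩ := hfinset g.range
  refine ⟨T, hT, fun u => ?_⟩
  have h1 : supp T u = ∫ x, |inner ℝ u (g x)| ∂μ := by
    rw [hT']
    have := SimpleFunc.map_integral (μ := μ) g (fun y => |inner ℝ u y|) hgi (by simp)
    rw [SimpleFunc.integral_eq_integral] at this
    · simp only [SimpleFunc.coe_map, Function.comp_apply, smul_eq_mul] at this
      exact this.symm
    · exact (SimpleFunc.map (fun y => |inner ℝ u y|) g).integrable_of_isFiniteMeasure
  have hi1 : Integrable (fun x => |inner ℝ u (g x)|) μ := (hgi.const_inner u).abs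
  have hi2 : Integrable (fun x => |inner ℝ u x|) μ := (hidi.const_inner u).abs
  have h2 : supp Z u = ∫ x, |inner ℝ u x| ∂μ := by rw [hZ, hμint]
  rw [h1, h2, ← integral_sub hi1 hi2, ← Real.norm_eq_abs]
  have h3 : ∫ x, ‖x - g x‖ ∂μ ≤ ε := by
    rw [eLpNorm_one_eq_lintegral_enorm] at hg
    have h4 := integral_norm_eq_lintegral_enorm (hidi.sub hgi).aestronglyMeasurable
    simp only [Pi.sub_apply, id] at h4
    rw [h4]
    exact ENNReal.toReal_le_of_le_ofReal hε.le hg.le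
  calc ‖∫ x, |inner ℝ u (g x)| - |inner ℝ u x| ∂μ‖ ≤ ∫ x, ‖u‖ * ‖x - g x‖ ∂μ := by
        refine norm_integral_le_of_norm_le ((hidi.sub hgi).norm.const_mul _)
          (ae_of_all _ fun x => ?_)
        rw [Real.norm_eq_abs]
        refine (abs_abs_sub_abs_le _ _).trans ?_
        rw [← inner_sub_right, norm_sub_rev]
        exact abs_real_inner_le_norm _ _
    _ = ‖u‖ * ∫ x, ‖x - g x‖ ∂μ := integral_const_mul _ _
    _ ≤ ε * ‖u‖ := by rw [mul_comm]; gcongr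

/-- If segments are neutral, so are all symmetric bodies: up to a small error, a symmetric body is
a difference of two zonoids. -/
lemma neut_symm {φ : ConvexBody E → ℂ} (hφ : Continuous φ) (hseg : ∀ x, Neut φ (seg (-x) x))
    (S : ConvexBody E) (hS : -(S : Set E) = S) : Neut φ S := by
  refine neut_of_approx hφ fun ε hε => ?_
  obtain ⟨T, w, hw, hwi, hw', hT, hTS⟩ := exists_mollified S hS hε
  refine ⟨T, ?_, hTS⟩
  have hpos : ∀ v : E → ℝ, Continuous v → Integrable v → Integrable (fun x => ‖x‖ * v x) →
      Continuous (fun x => max (v x) 0) ∧ Integrable (fun x => max (v x) 0) ∧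
        Integrable (fun x => ‖x‖ * max (v x) 0) := by
    intro v hv hvi hv'
    refine ⟨by fun_prop, hvi.pos_part, hv'.norm.mono' (by fun_prop) (ae_of_all _ fun x => ?_)⟩
    rw [norm_mul, norm_mul, norm_norm]
    gcongr
    rw [Real.norm_of_nonneg (le_max_right _ _)]
    exact max_le (Real.le_norm_self _) (norm_nonneg _)
  obtain ⟨hp1, hp2, hp3⟩ := hpos w hw hwi hw'
  obtain ⟨hn1, hn2, hn3⟩ := hpos (fun x => -w x) hw.neg hwi.neg (by simpa using hw'.neg)
  obtain ⟨Zp, hZp⟩ := exists_zonoid hp1 (fun x => le_max_right _ _) hp3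
  obtain ⟨Zn, hZn⟩ := exists_zonoid hn1 (fun x => le_max_right _ _) hn3
  have hNp := neut_zonoid hφ hseg hp1 (fun x => le_max_right _ _) hp2 hp3 Zp hZp
  have hNn := neut_zonoid hφ hseg hn1 (fun x => le_max_right _ _) hn2 hn3 Zn hZn
  have hsum : T + Zn = Zp := by
    refine eq_of_supp _ _ fun u => ?_
    rw [supp_add, hT, hZn, hZp, ← integral_add (integrable_abs_inner_mul hw hw' u)
      (integrable_abs_inner_mul hn1 hn3 u)]
    refine integral_congr_ae (ae_of_all _ fun x => ?_)
    simp only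
    rw [← mul_add]
    congr 1
    rcases le_total (w x) 0 with h | h
    · rw [max_eq_left (by linarith), max_eq_right h]; ring
    · rw [max_eq_right (by linarith), max_eq_left h]; ring
  intro L
  rw [← hNn (L + T), add_assoc, hsum, hNp]

end Zonoid

/-! ### Segments are neutral for valuations vanishing on hyperplanes and on prisms -/

section Segments

lemma mem_add_body {K L : ConvexBody E} {x : E} :
    x ∈ ((K + L : ConvexBody E) : Set E) ↔ ∃ y ∈ (K : Set E), ∃ z ∈ (L : Set E), y + z = x := by
  rw [ConvexBody.coe_add, Set.mem_add]

lemma mem_add_singleton {K : ConvexBody E} {v x : E} :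
    x ∈ ((K + ConvexBody.singletonBody v : ConvexBody E) : Set E) ↔ x - v ∈ (K : Set E) := by
  rw [mem_add_body]
  constructor
  · rintro ⟨y, hy, z, hz, rfl⟩
    have hz' : z = v := hz
    rw [hz', add_sub_cancel_right]
    exact hy
  · exact fun h => ⟨_, h, v, rfl, sub_add_cancel x v⟩

lemma mem_seg {u x : E} {t : ℝ} (ht : 0 ≤ t) :
    x ∈ (seg 0 (t • u) : Set E) ↔ ∃ τ, 0 ≤ τ ∧ τ ≤ t ∧ τ • u = x := by
  rw [coe_seg, segment_eq_image]
  constructor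
  · rintro ⟨θ, ⟨h0, h1⟩, rfl⟩
    exact ⟨θ * t, by positivity, mul_le_of_le_one_left ht h1, by simp [smul_smul]⟩
  · rintro ⟨τ, h0, h1, rfl⟩
    rcases ht.eq_or_lt with rfl | ht'
    · exact ⟨0, by simp, by simp [le_antisymm h1 h0]⟩
    · exact ⟨τ / t, ⟨by positivity, (div_le_one ht').2 h1⟩, by
        simp [smul_smul, div_mul_cancel₀ _ ht'.ne']⟩

lemma mem_add_seg {L : ConvexBody E} {u x : E} {t : ℝ} (ht : 0 ≤ t) :
    x ∈ ((L + seg 0 (t • u) : ConvexBody E) : Set E) ↔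
      ∃ τ, 0 ≤ τ ∧ τ ≤ t ∧ x - τ • u ∈ (L : Set E) := by
  rw [mem_add_body]
  constructor
  · rintro ⟨y, hy, z, hz, rfl⟩
    obtain ⟨τ, h0, h1, rfl⟩ := (mem_seg ht).1 hz
    exact ⟨τ, h0, h1, by rwa [add_sub_cancel_right]⟩
  · rintro ⟨τ, h0, h1, h⟩
    exact ⟨_, h, τ • u, (mem_seg ht).2 ⟨τ, h0, h1, rfl⟩, sub_add_cancel _ _⟩

/-- If `x + a u` and `x - b u` lie in a convex set with `a, b ≥ 0`, then so does `x`. -/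
lemma mem_of_between {L : Set E} (hL : Convex ℝ L) {x u : E} {a b : ℝ} (ha : 0 ≤ a) (hb : 0 ≤ b)
    (h1 : x + a • u ∈ L) (h2 : x - b • u ∈ L) : x ∈ L := by
  rcases (add_nonneg ha hb).eq_or_lt with h | h
  · have : a = 0 := by linarith
    simpa [this] using h1
  · have h3 := hL h1 h2 (a := b / (a + b)) (b := a / (a + b)) (by positivity) (by positivity)
      (by field_simp; ring)
    convert h3 using 1
    have : x = (b / (a + b) + a / (a + b)) • x + (b / (a + b) * a - a / (a + b) * b) • u := by
      have e1 : b / (a + b) + a / (a + b) = 1 := by field_simp; ring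
      have e2 : b / (a + b) * a - a / (a + b) * b = 0 := by ring
      rw [e1, e2]; simp
    conv_lhs => rw [this]
    module

variable {φ : ConvexBody E → ℂ}

/-- Stacking two prisms over the same base. -/
lemma prism_add (hv : IsValuation φ) (hτ : IsTranslationInvariant φ) (L : ConvexBody E) (u : E)
    {s t : ℝ} (hs : 0 ≤ s) (ht : 0 ≤ t) :
    φ (L + seg 0 ((s + t) • u)) = φ (L + seg 0 (s • u)) + φ (L + seg 0 (t • u)) - φ L := by
  have h := hv (L + seg 0 (s • u)) (L + seg 0 (t • u) + ConvexBody.singletonBody (s • u))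
    (L + seg 0 ((s + t) • u)) (L + ConvexBody.singletonBody (s • u)) ?_ ?_
  · rw [h, hτ, hτ]
  · ext x
    rw [Set.mem_union, mem_add_seg (by positivity), mem_add_seg hs, mem_add_singleton,
      mem_add_seg ht]
    constructor
    · rintro ⟨τ, h0, h1, h⟩
      rcases le_total τ s with h2 | h2
      · exact Or.inl ⟨τ, h0, h2, h⟩
      · refine Or.inr ⟨τ - s, by linarith, by linarith, ?_⟩
        convert h using 1
        module
    · rintro (⟨τ, h0, h1, h⟩ | ⟨τ, h0, h1, h⟩)
      · exact ⟨τ, h0, by linarith, h⟩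
      · refine ⟨τ + s, by linarith, by linarith, ?_⟩
        convert h using 1
        module
  · ext x
    rw [Set.mem_inter_iff, mem_add_seg hs, mem_add_singleton, mem_add_singleton,
      mem_add_seg ht]
    constructor
    · intro h
      exact ⟨⟨s, hs, le_rfl, h⟩, ⟨0, le_rfl, ht, by simpa using h⟩⟩
    · rintro ⟨⟨τ, h0, h1, h⟩, ⟨σ, h2, h3, h'⟩⟩
      refine mem_of_between L.convex (a := s - τ) (b := σ) (u := u) (by linarith) h2 ?_ h'
      convert h using 1
      module

/-- `φ` vanishes on bodies contained in affine hyperplanes. -/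
def Simple (φ : ConvexBody E → ℂ) : Prop :=
  ∀ (K : ConvexBody E) (u : E) (c : ℝ), u ≠ 0 → (∀ x ∈ (K : Set E), inner ℝ u x = c) → φ K = 0

/-- A simple valuation is additive under cutting by a hyperplane. -/
lemma cut_add (hv : IsValuation φ) (hs : Simple φ) {u : E} (hu : u ≠ 0) (c : ℝ)
    (K A B : ConvexBody E) (hA : (A : Set E) = {x | x ∈ (K : Set E) ∧ inner ℝ u x ≤ c})
    (hB : (B : Set E) = {x | x ∈ (K : Set E) ∧ c ≤ inner ℝ u x}) : φ K = φ A + φ B := by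
  have hne : ((A : Set E) ∩ B).Nonempty := by
    obtain ⟨x, hx⟩ := A.nonempty
    obtain ⟨y, hy⟩ := B.nonempty
    rw [hA] at hx
    rw [hB] at hy
    have hcont : ContinuousOn (fun z : E => inner ℝ u z) (segment ℝ x y) := by fun_prop
    obtain ⟨z, hz, hzc⟩ := (convex_segment x y).isPreconnected.intermediate_value
      (left_mem_segment ℝ x y) (right_mem_segment ℝ x y) hcont ⟨hx.2, hy.2⟩
    have hzK := K.convex.segment_subset hx.1 hy.1 hz
    exact ⟨z, by rw [hA]; exact ⟨hzK, hzc.le⟩, by rw [hB]; exact ⟨hzK, hzc.ge⟩⟩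
  let D : ConvexBody E := ⟨(A : Set E) ∩ B, A.convex.inter B.convex,
    A.isCompact.inter B.isCompact, hne⟩
  have hD : φ D = 0 := hs D u c hu fun x hx => by
    have h1 : x ∈ (A : Set E) := hx.1
    have h2 : x ∈ (B : Set E) := hx.2
    rw [hA] at h1
    rw [hB] at h2
    exact le_antisymm h1.2 h2.2
  rw [hv A B K D ?_ rfl, hD, sub_zero]
  ext x
  rw [hA, hB]
  constructor
  · intro h
    exact (le_total (inner ℝ u x) c).imp (fun h' => ⟨h, h'⟩) fun h' => ⟨h, h'⟩
  · rintro (h | h) <;> exact h.1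

/-- The part of a body in the half space `⟪u, x⟫ ≤ c`. -/
lemma exists_le_part (K : ConvexBody E) (u : E) (c : ℝ)
    (h : ∃ x ∈ (K : Set E), inner ℝ u x ≤ c) :
    ∃ A : ConvexBody E, (A : Set E) = {x | x ∈ (K : Set E) ∧ inner ℝ u x ≤ c} := by
  refine ⟨⟨{x | x ∈ (K : Set E) ∧ inner ℝ u x ≤ c}, ?_, ?_, ?_⟩, rfl⟩
  · exact K.convex.inter (convex_halfSpace_le ⟨inner_add_right u, fun a x => by
      simp [real_inner_smul_right]⟩ c)
  · exact K.isCompact.inter_right (isClosed_le (f := fun x => inner ℝ u x) (g := fun _ => c)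
      (by fun_prop) (by fun_prop))
  · obtain ⟨x, hx, hx'⟩ := h
    exact ⟨x, hx, hx'⟩

lemma exists_ge_part (K : ConvexBody E) (u : E) (c : ℝ)
    (h : ∃ x ∈ (K : Set E), c ≤ inner ℝ u x) :
    ∃ A : ConvexBody E, (A : Set E) = {x | x ∈ (K : Set E) ∧ c ≤ inner ℝ u x} := by
  obtain ⟨A, hA⟩ := exists_le_part K (-u) (-c) (by simpa [inner_neg_left] using h)
  exact ⟨A, by rw [hA]; simp [inner_neg_left]⟩

/-- A long prism cut perpendicularly to its axis: lengthening the axis by `u` only inserts a right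
prism in the middle. Comparing with `prism_add` shows that segments are neutral. -/
lemma add_seg_eq (hv : IsValuation φ) (hτ : IsTranslationInvariant φ) (hs : Simple φ)
    (hprism : ∀ (P : ConvexBody E) (u : E), u ≠ 0 → (∀ x ∈ (P : Set E), inner ℝ u x = 0) →
      φ (P + seg 0 u) = 0) (L : ConvexBody E) (u : E) : φ (L + seg 0 u) = φ L := by
  by_cases hu : u = 0
  · subst hu
    congr 1
    apply SetLike.coe_injective
    ext x
    rw [mem_add_body]
    simp [coe_seg]
  have hs0 : 0 < inner ℝ u u := real_inner_self_pos.2 hu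
  set s : ℝ := inner ℝ u u with hsdef
  set b := supp L u with hb
  set a := -supp L (-u) with ha
  have hLb : ∀ y ∈ (L : Set E), inner ℝ u y ≤ b := fun y hy => inner_le_supp L u hy
  have hLa : ∀ y ∈ (L : Set E), a ≤ inner ℝ u y := fun y hy => by
    have := inner_le_supp L (-u) hy
    rw [inner_neg_left] at this
    linarith
  obtain ⟨m, hm, hmb⟩ := exists_supp L u
  have hab : a ≤ b := (hLa m hm).trans (hLb m hm)
  set t := (b - a) / s with ht
  have ht0 : 0 ≤ t := div_nonneg (by linarith) hs0.le
  have hts : t * s = b - a := by rw [ht]; field_simp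
  have hin : ∀ (y : E) (τ : ℝ), inner ℝ u (y - τ • u) = inner ℝ u y - τ * s := fun y τ => by
    rw [inner_sub_right, real_inner_smul_right]
  -- the pieces of the long prism and of the short one
  obtain ⟨A1, hA1⟩ := exists_le_part (L + seg 0 ((t + 1) • u)) u b
    ⟨m, (mem_add_seg (by positivity)).2 ⟨0, le_rfl, by positivity, by simpa using hm⟩, hmb.le⟩
  obtain ⟨B1, hB1⟩ := exists_ge_part (L + seg 0 ((t + 1) • u)) u b
    ⟨m, (mem_add_seg (by positivity)).2 ⟨0, le_rfl, by positivity, by simpa using hm⟩, hmb.ge⟩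
  obtain ⟨A1', hA1'⟩ := exists_le_part (L + seg 0 (t • u)) u b
    ⟨m, (mem_add_seg ht0).2 ⟨0, le_rfl, ht0, by simpa using hm⟩, hmb.le⟩
  obtain ⟨B1', hB1'⟩ := exists_ge_part (L + seg 0 (t • u)) u b
    ⟨m, (mem_add_seg ht0).2 ⟨0, le_rfl, ht0, by simpa using hm⟩, hmb.ge⟩
  let π : E →ₗ[ℝ] E := LinearMap.id - (s⁻¹ • (innerₗ E u)).smulRight u
  have hπ : ∀ y, π y = y - (s⁻¹ * inner ℝ u y) • u := fun y => by simp [π]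
  let P : ConvexBody E := ⟨π '' L, L.convex.linear_image π,
    L.isCompact.image (by
      have : (π : E → E) = fun y => y - (s⁻¹ * inner ℝ u y) • u := funext hπ
      rw [this]; fun_prop), L.nonempty.image _⟩
  have hP : φ (P + seg 0 u) = 0 := by
    refine hprism P u hu ?_
    rintro _ ⟨y, -, rfl⟩
    rw [hπ, hin]
    field_simp
    ring
  have e1 := cut_add hv hs hu b _ _ _ hA1 hB1
  have e2 := cut_add hv hs hu b _ _ _ hA1' hB1'
  have e3 : φ A1 = φ A1' := by
    congr 1
    apply SetLike.coe_injective
    rw [hA1, hA1']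
    ext x
    simp only [Set.mem_ofPred_eq]
    rw [mem_add_seg (by positivity), mem_add_seg ht0]
    constructor
    · rintro ⟨⟨τ, h0, h1, h⟩, hx⟩
      refine ⟨⟨τ, h0, ?_, h⟩, hx⟩
      by_contra! hlt
      have h2 := hLa _ h
      rw [hin] at h2
      nlinarith
    · rintro ⟨⟨τ, h0, h1, h⟩, hx⟩
      exact ⟨⟨τ, h0, by linarith, h⟩, hx⟩
  have e4 : φ B1 = φ (P + seg 0 u + ConvexBody.singletonBody ((b / s) • u))
      + φ (B1' + ConvexBody.singletonBody u) := by
    refine cut_add hv hs hu (b + s) _ _ _ ?_ ?_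
    · ext x
      rw [hB1, mem_add_singleton]
      have := mem_add_seg (L := P) (u := u) (x := x - (b / s) • u) zero_le_one
      rw [one_smul] at this
      simp only [Set.mem_ofPred_eq]
      rw [this, mem_add_seg (by positivity)]
      constructor
      · rintro ⟨θ, h0, h1, y, hy, hyx⟩
        rw [hπ] at hyx
        have hx : x = y + (θ + b / s - s⁻¹ * inner ℝ u y) • u := by
          have : x = (x - (b / s) • u - θ • u) + (b / s) • u + θ • u := by abel
          rw [this, ← hyx]
          module
        have hxu : inner ℝ u x = b + θ * s := by
          rw [hx, inner_add_right, real_inner_smul_right]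
          field_simp
          ring
        have hy1 := hLb y hy
        have hy2 := hLa y hy
        refine ⟨⟨⟨θ + b / s - s⁻¹ * inner ℝ u y, ?_, ?_, ?_⟩, ?_⟩, ?_⟩
        · have : 0 ≤ (b - inner ℝ u y) / s := div_nonneg (by linarith) hs0.le
          have e : θ + b / s - s⁻¹ * inner ℝ u y = θ + (b - inner ℝ u y) / s := by
            field_simp; ring
          rw [e]; positivity
        · have : (b - inner ℝ u y) / s ≤ t := by rw [ht]; gcongr
          have e : θ + b / s - s⁻¹ * inner ℝ u y = θ + (b - inner ℝ u y) / s := by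
            field_simp; ring
          rw [e]; linarith
        · rw [hx, add_sub_cancel_right]; exact hy
        · rw [hxu]; nlinarith
        · rw [hxu]; nlinarith
      · rintro ⟨⟨⟨τ, h0, h1, h⟩, hx1⟩, hx2⟩
        refine ⟨(inner ℝ u x - b) / s, div_nonneg (by linarith) hs0.le,
          (div_le_one hs0).2 (by linarith), _, h, ?_⟩
        rw [hπ, hin]
        have e : s⁻¹ * (inner ℝ u x - τ * s) = b / s + (inner ℝ u x - b) / s - τ := by
          field_simp; ring
        rw [e]
        module
    · ext x
      rw [hB1, mem_add_singleton, hB1']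
      simp only [Set.mem_ofPred_eq]
      rw [mem_add_seg ht0, mem_add_seg (by positivity)]
      have hxu : inner ℝ u (x - u) = inner ℝ u x - s := by rw [inner_sub_right]
      rw [hxu]
      constructor
      · rintro ⟨⟨τ, h0, h1, h⟩, hx⟩
        refine ⟨⟨⟨τ + 1, by linarith, by linarith, ?_⟩, by linarith⟩, by linarith⟩
        convert h using 1
        module
      · rintro ⟨⟨⟨τ, h0, h1, h⟩, hx1⟩, hx2⟩
        have h2 := hLb _ h
        rw [hin] at h2
        refine ⟨⟨τ - 1, by nlinarith, by linarith, ?_⟩, by linarith⟩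
        convert h using 1
        module
  rw [hτ, hτ, hP, zero_add] at e4
  have e5 := prism_add hv hτ L u ht0 zero_le_one
  rw [e1, e3, e4, ← e2, one_smul] at e5
  linear_combination -e5

lemma neut_seg (hv : IsValuation φ) (hτ : IsTranslationInvariant φ) (hs : Simple φ)
    (hprism : ∀ (P : ConvexBody E) (u : E), u ≠ 0 → (∀ x ∈ (P : Set E), inner ℝ u x = 0) →
      φ (P + seg 0 u) = 0) (x : E) : Neut φ (seg (-x) x) := by
  intro L
  have h : seg (-x) x = seg 0 ((2 : ℝ) • x) + ConvexBody.singletonBody (-x) := by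
    apply SetLike.coe_injective
    ext y
    rw [mem_add_singleton, mem_seg two_pos.le, coe_seg, segment_eq_image]
    constructor
    · rintro ⟨θ, ⟨h0, h1⟩, rfl⟩
      exact ⟨2 * θ, by linarith, by linarith, by module⟩
    · rintro ⟨τ, h0, h1, h⟩
      refine ⟨τ / 2, ⟨by linarith, by linarith⟩, ?_⟩
      have : y = τ • x - x := by rw [h]; abel
      rw [this]
      module
  rw [h, ← add_assoc, hτ, add_seg_eq hv hτ hs hprism]

end Segments

/-! ### Reduction of arbitrary bodies to symmetric ones -/

lemma coe_negBody (K : ConvexBody E) : (ConvexBody.negBody K : Set E) = -(K : Set E) := rfl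

/-- With `C = conv (A ∪ -A)`, the bodies `A + C` and `-A + C` have a symmetric union `2C` and a
symmetric intersection. -/
lemma eq_zero_of_neut {φ : ConvexBody E → ℂ} (hv : IsValuation φ)
    (heven : ∀ K, φ (ConvexBody.negBody K) = φ K) (h0 : φ 0 = 0)
    (hN : ∀ S : ConvexBody E, -(S : Set E) = S → Neut φ S) (A : ConvexBody E) : φ A = 0 := by
  have hsymm : ∀ S : ConvexBody E, -(S : Set E) = S → φ S = 0 := fun S hS => by
    rw [← zero_add S, hN S hS, h0]
  let J : Set E := (fun q : ℝ × E × E => (1 - q.1) • q.2.1 - q.1 • q.2.2) ''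
    (Set.Icc (0 : ℝ) 1 ×ˢ ((A : Set E) ×ˢ (A : Set E)))
  have hJ : ∀ x, x ∈ J ↔ ∃ θ : ℝ, 0 ≤ θ ∧ θ ≤ 1 ∧ ∃ a ∈ (A : Set E), ∃ b ∈ (A : Set E),
      x = (1 - θ) • a - θ • b := by
    intro x
    constructor
    · rintro ⟨⟨θ, a, b⟩, ⟨⟨h1, h2⟩, h3, h4⟩, rfl⟩
      exact ⟨θ, h1, h2, a, h3, b, h4, rfl⟩
    · rintro ⟨θ, h1, h2, a, h3, b, h4, rfl⟩
      exact ⟨⟨θ, a, b⟩, ⟨⟨h1, h2⟩, h3, h4⟩, rfl⟩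
  have hJhull : J = convexHull ℝ ((A : Set E) ∪ -(A : Set E)) := by
    rw [A.convex.convexHull_union A.convex.neg A.nonempty A.nonempty.neg]
    ext x
    rw [hJ, mem_convexJoin]
    constructor
    · rintro ⟨θ, h1, h2, a, h3, b, h4, rfl⟩
      exact ⟨a, h3, -b, by simpa using h4, 1 - θ, θ, by linarith, h1, by ring, by module⟩
    · rintro ⟨a, ha, b, hb, s, t, hs, ht, hst, rfl⟩
      refine ⟨t, ht, by linarith, a, ha, -b, hb, ?_⟩
      rw [show s = 1 - t by linarith]
      module
  have hJc : Convex ℝ J := hJhull ▸ convex_convexHull ℝ _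
  have hAJ : ∀ a ∈ (A : Set E), a ∈ J := fun a ha =>
    (hJ a).2 ⟨0, le_rfl, zero_le_one, a, ha, a, ha, by simp⟩
  have hAJ' : ∀ a ∈ (A : Set E), -a ∈ J := fun a ha =>
    (hJ _).2 ⟨1, zero_le_one, le_rfl, a, ha, a, ha, by simp⟩
  have hJneg : ∀ x ∈ J, -x ∈ J := fun x hx => by
    obtain ⟨θ, h1, h2, a, h3, b, h4, rfl⟩ := (hJ x).1 hx
    exact (hJ _).2 ⟨1 - θ, by linarith, by linarith, b, h4, a, h3, by module⟩
  let C : ConvexBody E := ⟨J, hJc,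
    (isCompact_Icc.prod (A.isCompact.prod A.isCompact)).image (by fun_prop),
    A.nonempty.imp hAJ⟩
  have hCneg : -(C : Set E) = C := by
    ext x
    rw [Set.mem_neg]
    exact ⟨fun h => neg_neg x ▸ hJneg _ h, fun h => hJneg _ h⟩
  have hneg : ConvexBody.negBody (A + C) = ConvexBody.negBody A + C := by
    apply SetLike.coe_injective
    rw [coe_negBody, ConvexBody.coe_add, ConvexBody.coe_add, coe_negBody, neg_add, hCneg]
  obtain ⟨a₀, ha₀⟩ := A.nonempty
  let D : ConvexBody E := ⟨((A + C : ConvexBody E) : Set E) ∩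
    ((ConvexBody.negBody A + C : ConvexBody E) : Set E), (A + C).convex.inter (ConvexBody.convex _),
    (A + C).isCompact.inter (ConvexBody.isCompact _), 0,
    mem_add_body.2 ⟨a₀, ha₀, -a₀, hAJ' _ ha₀, by simp⟩,
    mem_add_body.2 ⟨-a₀, by rw [coe_negBody]; simpa using ha₀, a₀, hAJ _ ha₀, by simp⟩⟩
  have hD : φ D = 0 := by
    refine hsymm D ?_
    change -(((A + C : ConvexBody E) : Set E) ∩
      ((ConvexBody.negBody A + C : ConvexBody E) : Set E)) = ((A + C : ConvexBody E) : Set E) ∩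
      ((ConvexBody.negBody A + C : ConvexBody E) : Set E)
    rw [← hneg, coe_negBody, Set.inter_neg, neg_neg, Set.inter_comm]
  have hCC : φ (C + C) = 0 := hsymm _ (by rw [ConvexBody.coe_add, neg_add, hCneg])
  have hunion : ((C + C : ConvexBody E) : Set E) = ((A + C : ConvexBody E) : Set E) ∪
      ((ConvexBody.negBody A + C : ConvexBody E) : Set E) := by
    ext x
    rw [Set.mem_union, mem_add_body, mem_add_body, mem_add_body]
    constructor
    · rintro ⟨y, hy, z, hz, rfl⟩
      have hm : (1 / 2 : ℝ) • y + (1 / 2 : ℝ) • z ∈ J :=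
        hJc hy hz (by norm_num) (by norm_num) (by norm_num)
      obtain ⟨θ, h1, h2, a, h3, b, h4, h5⟩ := (hJ _).1 hm
      have h6 : y + z = (2 * (1 - θ)) • a - (2 * θ) • b := by
        have : y + z = (2 : ℝ) • ((1 / 2 : ℝ) • y + (1 / 2 : ℝ) • z) := by module
        rw [this, h5]
        module
      rw [h6]
      rcases le_total θ (1 / 2) with h | h
      · exact Or.inl ⟨a, h3, (1 - 2 * θ) • a - (2 * θ) • b,
          (hJ _).2 ⟨2 * θ, by linarith, by linarith, a, h3, b, h4, rfl⟩, by module⟩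
      · exact Or.inr ⟨-b, by rw [coe_negBody]; simpa using h4,
          (2 * (1 - θ)) • a - (2 * θ - 1) • b,
          (hJ _).2 ⟨2 * θ - 1, by linarith, by linarith, a, h3, b, h4, by module⟩, by module⟩
    · rintro (⟨y, hy, z, hz, rfl⟩ | ⟨y, hy, z, hz, rfl⟩)
      · exact ⟨y, hAJ y hy, z, hz, rfl⟩
      · have := hAJ' (-y) hy
        rw [neg_neg] at this
        exact ⟨y, this, z, hz, rfl⟩
  have h := hv _ _ _ D hunion rfl
  rw [hCC, hD, ← hneg, heven, sub_zero, hN C hCneg A] at h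
  have h2 : (2 : ℂ) * φ A = 0 := by linear_combination -h
  simpa using h2

/-! ### Continuity of Minkowski operations -/

lemma exists_dist_le_of_lt {K L : ConvexBody E} {r : ℝ} (h : dist K L < r) {x : E}
    (hx : x ∈ (K : Set E)) : ∃ y ∈ (L : Set E), dist x y ≤ r := by
  obtain ⟨y, hy, hxy⟩ := Metric.exists_dist_lt_of_hausdorffDist_lt hx
    (by rwa [ConvexBody.hausdorffDist_coe]) ConvexBody.hausdorffEDist_ne_top
  exact ⟨y, hy, hxy.le⟩

lemma dist_le_of_mem {K L : ConvexBody E} {r : ℝ} (hr : 0 ≤ r)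
    (h1 : ∀ x ∈ (K : Set E), ∃ y ∈ (L : Set E), dist x y ≤ r)
    (h2 : ∀ x ∈ (L : Set E), ∃ y ∈ (K : Set E), dist x y ≤ r) : dist K L ≤ r := by
  rw [← ConvexBody.hausdorffDist_coe]
  exact Metric.hausdorffDist_le_of_mem_dist hr h1 h2

lemma continuous_add_right_body (I : ConvexBody E) : Continuous fun K : ConvexBody E => K + I := by
  have key : ∀ {K L : ConvexBody E} {r : ℝ}, dist K L < r → ∀ x ∈ ((K + I : ConvexBody E) : Set E),
      ∃ y ∈ ((L + I : ConvexBody E) : Set E), dist x y ≤ r := by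
    intro K L r h x hx
    obtain ⟨a, ha, b, hb, rfl⟩ := mem_add_body.1 hx
    obtain ⟨y, hy, hay⟩ := exists_dist_le_of_lt h ha
    exact ⟨y + b, mem_add_body.2 ⟨y, hy, b, hb, rfl⟩, by rwa [dist_add_right]⟩
  refine LipschitzWith.continuous (K := 1) (LipschitzWith.of_dist_le_mul fun K L => ?_)
  rw [NNReal.coe_one, one_mul]
  refine le_of_forall_gt_imp_ge_of_dense fun r hr => ?_
  exact dist_le_of_mem (dist_nonneg.trans hr.le) (key hr) (key (by rwa [dist_comm]))

lemma continuous_seg (u : E) : Continuous fun t : ℝ => seg 0 (t • u) := by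
  have key : ∀ s t : ℝ, ∀ x ∈ (seg 0 (s • u) : Set E), ∃ y ∈ (seg 0 (t • u) : Set E),
      dist x y ≤ ‖u‖ * dist s t := by
    intro s t x hx
    rw [coe_seg, segment_eq_image] at hx
    obtain ⟨θ, ⟨h0, h1⟩, rfl⟩ := hx
    refine ⟨(1 - θ) • (0 : E) + θ • (t • u), ?_, ?_⟩
    · rw [coe_seg, segment_eq_image]
      exact ⟨θ, ⟨h0, h1⟩, rfl⟩
    · have : (1 - θ) • (0 : E) + θ • (s • u) - ((1 - θ) • (0 : E) + θ • (t • u))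
          = (θ * (s - t)) • u := by module
      rw [dist_eq_norm, this, norm_smul, Real.dist_eq, norm_mul, Real.norm_of_nonneg h0,
        Real.norm_eq_abs, mul_comm]
      gcongr
      exact mul_le_of_le_one_left (abs_nonneg _) h1
  refine LipschitzWith.continuous (K := ‖u‖₊) (LipschitzWith.of_dist_le_mul fun s t => ?_)
  rw [coe_nnnorm]
  refine dist_le_of_mem (by positivity) (key s t) fun x hx => ?_
  rw [dist_comm s t]
  exact key t s x hx

lemma continuous_smul_body (K : ConvexBody E) : Continuous fun c : ℝ≥0 => c • K := by
  obtain ⟨R, hR, h⟩ := K.isBounded.exists_pos_norm_le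
  have key : ∀ s t : ℝ≥0, ∀ x ∈ ((s • K : ConvexBody E) : Set E),
      ∃ y ∈ ((t • K : ConvexBody E) : Set E), dist x y ≤ R * dist s t := by
    intro s t x hx
    rw [ConvexBody.coe_smul'] at hx
    obtain ⟨a, ha, rfl⟩ := hx
    refine ⟨t • a, by rw [ConvexBody.coe_smul']; exact ⟨a, ha, rfl⟩, ?_⟩
    have : s • a - t • a = ((s : ℝ) - t) • a := by
      rw [sub_smul]; rfl
    change dist (s • a) (t • a) ≤ _
    rw [dist_eq_norm, this, norm_smul, mul_comm, NNReal.dist_eq, Real.norm_eq_abs]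
    gcongr
    exact h a ha
  refine LipschitzWith.continuous (K := ⟨R, hR.le⟩) (LipschitzWith.of_dist_le_mul fun s t => ?_)
  refine dist_le_of_mem (by positivity) (key s t) fun x hx => ?_
  rw [dist_comm s t]
  exact key t s x hx

/-! ### Restriction to subspaces -/

/-- A convex body in a subspace, viewed in the ambient space. -/
def incl (H : Submodule ℝ E) (K : ConvexBody H) : ConvexBody E :=
  ⟨H.subtype '' K, K.convex.linear_image _, K.isCompact.image continuous_subtype_val,
    K.nonempty.image _⟩

lemma mem_incl {H : Submodule ℝ E} {K : ConvexBody H} {x : E} :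
    x ∈ (incl H K : Set E) ↔ ∃ y ∈ (K : Set H), (y : E) = x := Iff.rfl

lemma incl_add (H : Submodule ℝ E) (K L : ConvexBody H) :
    incl H (K + L) = incl H K + incl H L := by
  apply SetLike.coe_injective
  change H.subtype '' ((K + L : ConvexBody H) : Set H) = _
  rw [ConvexBody.coe_add, ConvexBody.coe_add, Set.image_add]
  rfl

lemma incl_singleton (H : Submodule ℝ E) (x : H) :
    incl H (ConvexBody.singletonBody x) = ConvexBody.singletonBody (x : E) := by
  apply SetLike.coe_injective
  exact Set.image_singleton

lemma incl_smul (H : Submodule ℝ E) (c : ℝ≥0) (K : ConvexBody H) :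
    incl H (c • K) = c • incl H K := by
  apply SetLike.coe_injective
  change H.subtype '' ((c • K : ConvexBody H) : Set H) = _
  rw [ConvexBody.coe_smul', ConvexBody.coe_smul']
  exact Set.image_smul_comm _ _ _ fun y => rfl

lemma incl_neg (H : Submodule ℝ E) (K : ConvexBody H) :
    incl H (ConvexBody.negBody K) = ConvexBody.negBody (incl H K) := by
  apply SetLike.coe_injective
  change H.subtype '' (-(K : Set H)) = -(H.subtype '' (K : Set H))
  exact Set.image_neg_of_apply_neg_eq_neg fun x _ => rfl

lemma continuous_incl (H : Submodule ℝ E) : Continuous (incl H) := by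
  refine (Isometry.of_dist_eq fun K L => ?_).continuous
  rw [← ConvexBody.hausdorffDist_coe, ← ConvexBody.hausdorffDist_coe]
  exact Metric.hausdorffDist_image isometry_subtype_coe

lemma exists_incl [FiniteDimensional ℝ E] (H : Submodule ℝ E) (K : ConvexBody E)
    (h : (K : Set E) ⊆ H) : ∃ L : ConvexBody H, incl H L = K := by
  have himg : H.subtype '' (H.subtype ⁻¹' (K : Set E)) = K := by
    rw [Set.image_preimage_eq_iff]
    intro x hx
    exact ⟨⟨x, h hx⟩, rfl⟩
  refine ⟨⟨H.subtype ⁻¹' (K : Set E), K.convex.linear_preimage _, ?_, ?_⟩, ?_⟩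
  · exact (Submodule.closed_of_finiteDimensional H).isClosedEmbedding_subtypeVal.isCompact_preimage
      K.isCompact
  · obtain ⟨x, hx⟩ := K.nonempty
    exact ⟨⟨x, h hx⟩, hx⟩
  · exact SetLike.coe_injective himg

/-! ### Induction on the dimension -/

/-- Cauchy's functional equation for the length of a prism with a null base. -/
lemma prism_linear {φ : ConvexBody E → ℂ} (hφ : MemVal φ) (L : ConvexBody E) (u : E)
    (h0 : φ L = 0) {t : ℝ} (ht : 0 ≤ t) :
    φ (L + seg 0 (t • u)) = (t : ℂ) * φ (L + seg 0 u) := by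
  obtain ⟨hv, hτ, hc⟩ := hφ
  let f : ℝ → ℂ := fun t => φ (L + seg 0 (t • u))
  have hf : Continuous f := by
    have h : Continuous fun t : ℝ => seg 0 (t • u) + L :=
      (continuous_add_right_body L).comp (continuous_seg u)
    simp_rw [add_comm _ L] at h
    exact hc.comp h
  have hadd : ∀ s t : ℝ, 0 ≤ s → 0 ≤ t → f (s + t) = f s + f t := fun s t hs ht => by
    have := prism_add hv hτ L u hs ht
    rwa [h0, sub_zero] at this
  have hf0 : f 0 = 0 := by simpa using hadd 0 0 le_rfl le_rfl
  have hmul : ∀ (m : ℕ) (s : ℝ), 0 ≤ s → f (m * s) = m * f s := by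
    intro m s hs
    induction m with
    | zero => simpa using hf0
    | succ m ih =>
      rw [Nat.cast_succ, Nat.cast_succ, add_mul, add_mul, one_mul, one_mul,
        hadd _ _ (by positivity) hs, ih]
  have hrat : ∀ k : ℕ, 0 < k → f ((⌊t * k⌋₊ : ℝ) / k) = (((⌊t * k⌋₊ : ℝ) / k : ℝ) : ℂ) * f 1 := by
    intro k hk
    have hk' : (k : ℝ) ≠ 0 := by positivity
    have hk'' : (k : ℂ) ≠ 0 := by exact_mod_cast hk.ne'
    have h1 := hmul k (1 / k) (by positivity)
    rw [mul_one_div_cancel hk'] at h1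
    rw [h1, ← mul_one_div, hmul _ _ (by positivity)]
    push_cast
    field_simp
  have hlim : Filter.Tendsto (fun k : ℕ => (⌊t * k⌋₊ : ℝ) / k) Filter.atTop (nhds t) :=
    (tendsto_nat_floor_mul_div_atTop ht).comp tendsto_natCast_atTop_atTop
  have h1 := (hf.tendsto t).comp hlim
  have h2 := ((Complex.continuous_ofReal.tendsto t).comp hlim).mul_const (f 1)
  have h3 : f t = (t : ℂ) * f 1 := tendsto_nhds_unique_of_eventuallyEq h1 h2 (by
    filter_upwards [Filter.eventually_gt_atTop 0] with k hk using hrat k hk)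
  simpa [f] using h3

lemma seg_neg (u : E) : seg 0 (-u) = seg 0 u + ConvexBody.singletonBody (-u) := by
  apply SetLike.coe_injective
  ext x
  rw [mem_add_singleton, coe_seg, coe_seg, segment_symm, segment_eq_image, segment_eq_image]
  constructor
  · rintro ⟨θ, h, rfl⟩
    exact ⟨θ, h, by module⟩
  · rintro ⟨θ, h, h'⟩
    refine ⟨θ, h, ?_⟩
    rw [← sub_left_inj (a := -u), ← h']
    module

lemma neg_add_seg (K : ConvexBody E) (u : E) :
    ConvexBody.negBody K + seg 0 u = ConvexBody.negBody (K + seg 0 (-u)) := by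
  apply SetLike.coe_injective
  rw [coe_negBody, ConvexBody.coe_add, ConvexBody.coe_add, coe_negBody, neg_add, coe_seg, coe_seg]
  congr 1
  ext x
  rw [Set.mem_neg, segment_eq_image, segment_eq_image]
  constructor
  · rintro ⟨θ, h, rfl⟩
    exact ⟨θ, h, by module⟩
  · rintro ⟨θ, h, h'⟩
    refine ⟨θ, h, ?_⟩
    rw [← neg_inj, ← h']
    module

lemma smul_add_seg (K : ConvexBody E) (u : E) (c : ℝ≥0) :
    c • (K + seg 0 u) = c • K + seg 0 ((c : ℝ) • u) := by
  apply SetLike.coe_injective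
  rw [ConvexBody.coe_smul', ConvexBody.coe_add, ConvexBody.coe_add, ConvexBody.coe_smul', smul_add,
    coe_seg, coe_seg]
  congr 1
  ext x
  rw [segment_eq_image, segment_eq_image, Set.mem_smul_set]
  constructor
  · rintro ⟨_, ⟨θ, h, rfl⟩, rfl⟩
    refine ⟨θ, h, ?_⟩
    simp only [NNReal.smul_def]
    module
  · rintro ⟨θ, h, rfl⟩
    refine ⟨_, ⟨θ, h, rfl⟩, ?_⟩
    simp only [NNReal.smul_def]
    module

/-- Injectivity of the Klain map in every Euclidean space of dimension `n`. -/
def KlainInjective (n : ℕ) : Prop :=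
  ∀ (i : ℕ) (E : Type) [NormedAddCommGroup E] [InnerProductSpace ℝ E] [FiniteDimensional ℝ E]
    (φ : ConvexBody E → ℂ), Module.finrank ℝ E = n → i ≤ n → MemVal φ →
    (∀ K, φ (ConvexBody.negBody K) = φ K) → IsHomogeneousVal φ i →
    (∀ K : ConvexBody E, (∃ W : Submodule ℝ E, Module.finrank ℝ W = i ∧ (K : Set E) ⊆ W) →
      φ K = 0) → ∀ K, φ K = 0

lemma finrank_orth [FiniteDimensional ℝ E] {n : ℕ} (hn : Module.finrank ℝ E = n + 1) {u : E}
    (hu : u ≠ 0) : Module.finrank ℝ (ℝ ∙ u)ᗮ = n := by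
  have : Fact (Module.finrank ℝ E = n + 1) := ⟨hn⟩
  exact Submodule.finrank_orthogonal_span_singleton hu

/-- A valuation of non-maximal degree with zero Klain function is simple: restrict it to
hyperplanes. -/
lemma simple_of_klain [FiniteDimensional ℝ E] {n i : ℕ} (ih : KlainInjective n)
    (hn : Module.finrank ℝ E = n + 1) (hi : i ≤ n) {φ : ConvexBody E → ℂ} (hφ : MemVal φ)
    (heven : ∀ K, φ (ConvexBody.negBody K) = φ K) (hhom : IsHomogeneousVal φ i)
    (hvanish : ∀ K : ConvexBody E, (∃ W : Submodule ℝ E, Module.finrank ℝ W = i ∧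
      (K : Set E) ⊆ W) → φ K = 0) : Simple φ := by
  intro K u c hu hK
  obtain ⟨hv, hτ, hc⟩ := hφ
  set H : Submodule ℝ E := (ℝ ∙ u)ᗮ with hH
  have key : ∀ L : ConvexBody H, φ (incl H L) = 0 := by
    refine ih i H (fun L => φ (incl H L)) (finrank_orth hn hu) hi ⟨?_, ?_, ?_⟩ ?_ ?_ ?_
    · intro A B C D hC hD
      refine hv _ _ _ _ ?_ ?_
      · change H.subtype '' (C : Set H) = _
        rw [hC, Set.image_union]
        rfl
      · change H.subtype '' (D : Set H) = _
        rw [hD, Set.image_inter H.injective_subtype]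
        rfl
    · intro L x
      simp only [incl_add, incl_singleton]
      exact hτ _ _
    · exact hc.comp (continuous_incl H)
    · intro L
      simp only [incl_neg]
      exact heven _
    · intro a L
      simp only [incl_smul]
      exact hhom _ _
    · rintro L ⟨W, hW, hLW⟩
      refine hvanish _ ⟨W.map H.subtype, by rw [Submodule.finrank_map_subtype_eq, hW], ?_⟩
      rintro x hx
      obtain ⟨y, hy, rfl⟩ := mem_incl.1 hx
      exact ⟨y, hLW hy, rfl⟩
  have huu : inner ℝ u u ≠ 0 := by simpa using hu
  rw [← hτ K (-((c / inner ℝ u u) • u))]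
  obtain ⟨L, hL⟩ := exists_incl H (K + ConvexBody.singletonBody (-((c / inner ℝ u u) • u))) (by
    intro x hx
    rw [mem_add_singleton] at hx
    have := hK _ hx
    rw [SetLike.mem_coe, hH, Submodule.mem_orthogonal_singleton_iff_inner_right]
    rw [sub_neg_eq_add, inner_add_right, real_inner_smul_right, div_mul_cancel₀ _ huu] at this
    linarith)
  rw [← hL]
  exact key L

/-- Right prisms are null: `L ↦ φ (L + [0, u])` is an even valuation on the hyperplane `u^⊥`, its
degree is one less than that of `φ`, and its Klain function is zero. -/
lemma prism_of_klain [FiniteDimensional ℝ E] {n j : ℕ} (ih : KlainInjective n)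
    (hn : Module.finrank ℝ E = n + 1) (hj : j ≤ n) {φ : ConvexBody E → ℂ} (hφ : MemVal φ)
    (heven : ∀ K, φ (ConvexBody.negBody K) = φ K) (hhom : IsHomogeneousVal φ (j + 1))
    (hvanish : ∀ K : ConvexBody E, (∃ W : Submodule ℝ E, Module.finrank ℝ W = j + 1 ∧
      (K : Set E) ⊆ W) → φ K = 0) (hs : Simple φ) (P : ConvexBody E) (u : E) (hu : u ≠ 0)
    (hP : ∀ x ∈ (P : Set E), inner ℝ u x = 0) : φ (P + seg 0 u) = 0 := by
  have hφ' := hφ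
  obtain ⟨hv, hτ, hc⟩ := hφ
  set H : Submodule ℝ E := (ℝ ∙ u)ᗮ with hH
  have hmem : ∀ x, x ∈ H ↔ inner ℝ u x = 0 := fun x =>
    Submodule.mem_orthogonal_singleton_iff_inner_right
  have huu : inner ℝ u u ≠ 0 := by simpa using hu
  have hnull : ∀ L : ConvexBody H, φ (incl H L) = 0 := fun L => by
    refine hs _ u 0 hu fun x hx => ?_
    obtain ⟨y, -, rfl⟩ := mem_incl.1 hx
    exact (hmem _).1 y.2
  have hcont : Continuous fun L : ConvexBody H => φ (incl H L + seg 0 u) :=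
    hc.comp ((continuous_add_right_body _).comp (continuous_incl H))
  have hprism : ∀ (L : ConvexBody H) (x : E), x ∈ ((incl H L + seg 0 u : ConvexBody E) : Set E) ↔
      ∃ y ∈ (L : Set H), ∃ τ : ℝ, 0 ≤ τ ∧ τ ≤ 1 ∧ x = y + τ • u := by
    intro L x
    have := mem_add_seg (L := incl H L) (u := u) (x := x) zero_le_one
    rw [one_smul] at this
    rw [this]
    constructor
    · rintro ⟨τ, h0, h1, h⟩
      obtain ⟨y, hy, hyx⟩ := mem_incl.1 h
      exact ⟨y, hy, τ, h0, h1, by rw [hyx]; abel⟩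
    · rintro ⟨y, hy, τ, h0, h1, rfl⟩
      exact ⟨τ, h0, h1, mem_incl.2 ⟨y, hy, by abel⟩⟩
  have key : ∀ L : ConvexBody H, φ (incl H L + seg 0 u) = 0 := by
    refine ih j H (fun L => φ (incl H L + seg 0 u)) (finrank_orth hn hu) hj ⟨?_, ?_, hcont⟩ ?_ ?_ ?_
    · intro A B C D hC hD
      refine hv _ _ _ _ ?_ ?_
      · ext x
        rw [Set.mem_union, hprism, hprism, hprism, hC]
        constructor
        · rintro ⟨y, hy | hy, h⟩
          · exact Or.inl ⟨y, hy, h⟩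
          · exact Or.inr ⟨y, hy, h⟩
        · rintro (⟨y, hy, h⟩ | ⟨y, hy, h⟩)
          · exact ⟨y, Or.inl hy, h⟩
          · exact ⟨y, Or.inr hy, h⟩
      · ext x
        rw [Set.mem_inter_iff, hprism, hprism, hprism, hD]
        constructor
        · rintro ⟨y, hy, h⟩
          exact ⟨⟨y, hy.1, h⟩, ⟨y, hy.2, h⟩⟩
        · rintro ⟨⟨y, hy, τ, h0, h1, rfl⟩, ⟨z, hz, σ, -, -, h⟩⟩
          -- The component along `u`, hence also the component in `H`, is determined by the point.
          have h2 := congrArg (inner ℝ u) h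
          rw [inner_add_right, inner_add_right, (hmem _).1 y.2, (hmem _).1 z.2,
            real_inner_smul_right, real_inner_smul_right, zero_add, zero_add] at h2
          have h3 : τ = σ := mul_right_cancel₀ huu h2
          subst h3
          have h4 : y = z := Subtype.ext (add_right_cancel h)
          subst h4
          exact ⟨y, ⟨hy, hz⟩, τ, h0, h1, rfl⟩
    · intro L x
      simp only [incl_add, incl_singleton]
      rw [add_right_comm]
      exact hτ _ _
    · intro L
      simp only [incl_neg]
      rw [neg_add_seg, heven, seg_neg, ← add_assoc, hτ]
    · have hpos : ∀ (c : ℝ≥0) (L : ConvexBody H), 0 < c →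
          φ (incl H (c • L) + seg 0 u) = ((c : ℝ) : ℂ) ^ j * φ (incl H L + seg 0 u) := by
        intro c L hc0
        have hc1 : (c : ℝ) ≠ 0 := by exact_mod_cast hc0.ne'
        have h1 : incl H (c • L) + seg 0 u = c • (incl H L + seg 0 ((c : ℝ)⁻¹ • u)) := by
          rw [smul_add_seg, smul_inv_smul₀ hc1, incl_smul]
        rw [h1, hhom, prism_linear hφ' _ _ (hnull L) (by positivity), pow_succ]
        have hc2 : ((c : ℝ) : ℂ) ≠ 0 := by exact_mod_cast hc1
        push_cast at hc2 ⊢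
        field_simp
      intro c L
      -- The case `c = 0` follows by continuity.
      have hl : Continuous fun c : ℝ≥0 => φ (incl H (c • L) + seg 0 u) :=
        hcont.comp (continuous_smul_body L)
      have hr : Continuous fun c : ℝ≥0 => ((c : ℝ) : ℂ) ^ j * φ (incl H L + seg 0 u) := by
        fun_prop
      have hd : Dense (Set.Ioi (0 : ℝ≥0)) := by
        rw [dense_iff_closure_eq, closure_Ioi, Set.eq_univ_iff_forall]
        exact fun x => Set.mem_Ici.2 zero_le
      exact congrFun (hl.ext_on hd hr fun c hc => hpos c L hc) c
    · rintro L ⟨W, hW, hLW⟩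
      refine hvanish _ ⟨W.map H.subtype ⊔ (ℝ ∙ u), ?_, ?_⟩
      · have h1 := Submodule.finrank_sup_add_finrank_inf_eq (W.map H.subtype) (ℝ ∙ u)
        have h2 : W.map H.subtype ⊓ (ℝ ∙ u) = ⊥ := by
          refine disjoint_iff.1 (Disjoint.mono_left (Submodule.map_subtype_le H W) ?_)
          exact (Submodule.orthogonal_disjoint (ℝ ∙ u)).symm
        rw [h2, finrank_bot, Submodule.finrank_map_subtype_eq, hW, finrank_span_singleton hu] at h1
        exact h1
      · intro x hx
        obtain ⟨y, hy, τ, -, -, rfl⟩ := (hprism _ _).1 hx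
        exact Submodule.add_mem_sup ⟨y, hLW hy, rfl⟩
          (Submodule.smul_mem _ _ (Submodule.mem_span_singleton_self u))
  obtain ⟨L, rfl⟩ := exists_incl H P fun x hx => (hmem x).2 (hP x hx)
  exact key L

theorem klainInjective (n : ℕ) : KlainInjective n := by
  induction n with
  | zero =>
    intro i E _ _ _ φ hn hi hφ heven hhom hvanish K
    exact hvanish K ⟨⊤, by rw [finrank_top]; omega, fun _ _ => trivial⟩
  | succ n ih =>
    intro i E _ _ _ φ hn hi hφ heven hhom hvanish K
    rcases hi.eq_or_lt with rfl | hi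
    · exact hvanish K ⟨⊤, by rw [finrank_top]; omega, fun _ _ => trivial⟩
    rcases i with _ | j
    · have h0 := hhom 0 K
      rw [pow_zero, one_mul] at h0
      rw [← h0]
      refine hvanish _ ⟨⊥, finrank_bot ℝ E, ?_⟩
      rw [ConvexBody.coe_smul', Set.zero_smul_set K.nonempty]
      exact fun x hx => hx
    · have hs : Simple φ := simple_of_klain ih hn (by omega) hφ heven hhom hvanish
      have hprism := prism_of_klain ih hn (by omega) hφ heven hhom hvanish hs
      let : MeasurableSpace E := borel E
      have : BorelSpace E := ⟨rfl⟩
      have hseg : ∀ x, Neut φ (seg (-x) x) := neut_seg hφ.1 hφ.2.1 hs hprism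
      have : Nontrivial E := Module.nontrivial_of_finrank_pos (R := ℝ) (by omega)
      obtain ⟨u, hu⟩ := exists_ne (0 : E)
      have h0 : φ 0 = 0 := hs 0 u 0 hu fun x hx => by
        have : x = 0 := hx
        rw [this, inner_zero_right]
      exact eq_zero_of_neut hφ.1 heven h0 (neut_symm hφ.2.2 hseg) K

end Klain

/-- **Injectivity of the Klain map.** An even `i`-homogeneous translation invariant continuous
valuation on `ℝⁿ` that vanishes on all convex bodies contained in some `i`-dimensional linear
subspace is identically zero. -/
theorem klain_map_injective (n i : ℕ) (hi : i ≤ n)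
    (φ : ConvexBody (EuclideanSpace ℝ (Fin n)) → ℂ) (hφ : MemVal φ)
    (heven : ∀ K, φ (ConvexBody.negBody K) = φ K)
    (hhom : IsHomogeneousVal φ i)
    (hvanish : ∀ K : ConvexBody (EuclideanSpace ℝ (Fin n)),
      (∃ W : Submodule ℝ (EuclideanSpace ℝ (Fin n)), Module.finrank ℝ W = i ∧
        (K : Set (EuclideanSpace ℝ (Fin n))) ⊆ (W : Set (EuclideanSpace ℝ (Fin n)))) →
      φ K = 0) :
    ∀ K, φ K = 0 := by
  exact Klain.klainInjective n i _ φ finrank_euclideanSpace_fin hi hφ heven hhom hvanish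
end

section
/- Fubini formula for the exterior product on linear combinations of volumes: let V, W be finite-dimensional real vector spaces with Lebesgue measures vol_V, vol_W, and let vol_{V×W} be the product measure. Let c_1, …, c_m ∈ ℂ, A_1, …, A_m ∈ K(V), B ∈ K(W), and define φ(S) = Σ_{i=1}^m c_i vol_V(S + A_i) for S ∈ K(V), extended by φ(∅) = 0. Then for every K ∈ K(V × W): Σ_{i=1}^m c_i · vol_{V×W}(K + (A_i × B)) = ∫_{w ∈ W} φ({v ∈ V : (v, w) ∈ K + ({0} × B)}) d vol_W(w). In particular, if Σ_i c_i vol_V(· + A_i) is the zero function on K(V), then Σ_i c_i vol_{V×W}(· + (A_i × B)) is the zero function on K(V × W) (well-definedness of the exterior product of valuations on such linear combinations). -/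
/-!
The key point is that slicing at height `w` commutes with adding a body of `V`: the slice of
`K + A × B` at `w` is the slice of `K + {0} × B` at `w`, plus `A` (`slice_add_prodBody`).
Since `K + A × B` is compact, its volume is the integral over `w` of the volumes of its slices
(Tonelli), and these are integrable because the volume is finite; summing over `i` gives the
formula. Each slice of `K + {0} × B` is either empty or a convex body of `V`, so the integrand
vanishes identically as soon as `∑ᵢ cᵢ vol_V (· + Aᵢ)` vanishes on convex bodies.
-/

open scoped NNReal Pointwise
open Metric MeasureTheory

/-- The product `K × L` of convex bodies. -/
def ConvexBody.prodBody {V W : Type*} [NormedAddCommGroup V] [NormedSpace ℝ V]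
    [NormedAddCommGroup W] [NormedSpace ℝ W] (K : ConvexBody V) (L : ConvexBody W) :
    ConvexBody (V × W) :=
  ⟨(K : Set V) ×ˢ (L : Set W), K.convex.prod L.convex, K.isCompact.prod L.isCompact,
    K.nonempty.prod L.nonempty⟩

theorem slice_add_prodBody {V W : Type*} [NormedAddCommGroup V] [NormedSpace ℝ V]
    [NormedAddCommGroup W] [NormedSpace ℝ W]
    (K : ConvexBody (V × W)) (A : ConvexBody V) (B : ConvexBody W) (w : W) :
    {v : V | (v, w) ∈ ((K + (ConvexBody.singletonBody (0 : V)).prodBody B :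
        ConvexBody (V × W)) : Set (V × W))} + (A : Set V) =
      {v : V | (v, w) ∈ ((K + A.prodBody B : ConvexBody (V × W)) : Set (V × W))} := by
  ext v
  simp only [ConvexBody.coe_add, Set.mem_add, Set.mem_ofPred_eq]
  constructor
  · rintro ⟨x, ⟨k, hk, ⟨z, b⟩, ⟨hz, hb⟩, h⟩, a, ha, rfl⟩
    obtain rfl : z = 0 := hz
    refine ⟨k, hk, (a, b), ⟨ha, hb⟩, ?_⟩
    simp only [Prod.ext_iff, Prod.fst_add, Prod.snd_add, add_zero] at h ⊢
    exact ⟨by rw [h.1], h.2⟩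
  · rintro ⟨k, hk, ⟨a, b⟩, ⟨ha, hb⟩, h⟩
    simp only [Prod.ext_iff, Prod.fst_add, Prod.snd_add] at h
    refine ⟨k.1, ⟨k, hk, (0, b), ⟨rfl, hb⟩, ?_⟩, a, ha, h.1⟩
    simp only [Prod.ext_iff, Prod.fst_add, Prod.snd_add, add_zero]
    exact ⟨trivial, h.2⟩

theorem convex_slice {V W : Type*} [NormedAddCommGroup V] [NormedSpace ℝ V]
    [NormedAddCommGroup W] [NormedSpace ℝ W] (L : ConvexBody (V × W)) (w : W) :
    Convex ℝ {v : V | (v, w) ∈ (L : Set (V × W))} := by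
  intro x hx y hy a b ha hb hab
  have h := L.convex hx hy ha hb hab
  rwa [Prod.smul_mk, Prod.smul_mk, Prod.mk_add_mk, ← add_smul, hab, one_smul] at h

theorem isCompact_slice {V W : Type*} [NormedAddCommGroup V] [NormedSpace ℝ V]
    [NormedAddCommGroup W] [NormedSpace ℝ W] (L : ConvexBody (V × W)) (w : W) :
    IsCompact {v : V | (v, w) ∈ (L : Set (V × W))} := by
  have hclosed : IsClosed {v : V | (v, w) ∈ (L : Set (V × W))} :=
    L.isCompact.isClosed.preimage (Continuous.prodMk_left w)
  exact (L.isCompact.image continuous_fst).of_isClosed_subset hclosed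
    fun v hv => ⟨(v, w), hv, rfl⟩

/-- Tonelli's formula for the volume of a convex body in a product, in real-valued form.
Integrability is included because the Bochner integral of a non-integrable function is `0`. -/
theorem integrable_slice_and_integral_slice {V W : Type*}
    [NormedAddCommGroup V] [NormedSpace ℝ V] [FiniteDimensional ℝ V]
    [MeasurableSpace V] [BorelSpace V]
    [NormedAddCommGroup W] [NormedSpace ℝ W] [FiniteDimensional ℝ W]
    [MeasurableSpace W] [BorelSpace W]
    (μV : Measure V) (μW : Measure W) [μV.IsAddHaarMeasure] [μW.IsAddHaarMeasure]
    (L : ConvexBody (V × W)) :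
    Integrable (fun w : W => (μV {v : V | (v, w) ∈ (L : Set (V × W))}).toReal) μW ∧
      ∫ w : W, (μV {v : V | (v, w) ∈ (L : Set (V × W))}).toReal ∂μW =
        ((μV.prod μW) (L : Set (V × W))).toReal := by
  have := FiniteDimensional.proper ℝ V
  have := FiniteDimensional.proper ℝ W
  have hL : MeasurableSet (L : Set (V × W)) := L.isCompact.isClosed.measurableSet
  have hmeas : Measurable fun w : W => μV {v : V | (v, w) ∈ (L : Set (V × W))} :=
    measurable_measure_prodMk_right hL
  have hprod : (μV.prod μW) (L : Set (V × W)) =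
      ∫⁻ w : W, μV {v : V | (v, w) ∈ (L : Set (V × W))} ∂μW :=
    Measure.prod_apply_symm hL
  have hfin : (μV.prod μW) (L : Set (V × W)) ≠ ⊤ := L.isCompact.measure_lt_top.ne
  refine ⟨integrable_toReal_of_lintegral_ne_top hmeas.aemeasurable (hprod ▸ hfin), ?_⟩
  rw [hprod]
  exact integral_toReal hmeas.aemeasurable
    (Filter.Eventually.of_forall fun w => (isCompact_slice L w).measure_lt_top)

/-- **Fubini formula for the exterior product on linear combinations of volumes.**
For `φ(S) = ∑ᵢ cᵢ vol_V (S + Aᵢ)` one has, for every convex body `K ⊆ V × W`,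
`∑ᵢ cᵢ vol_{V×W}(K + Aᵢ × B) = ∫_W φ({v : (v,w) ∈ K + {0} × B}) d vol_W(w)`.
In particular, if `∑ᵢ cᵢ vol_V (· + Aᵢ)` vanishes identically on `K(V)`, then
`∑ᵢ cᵢ vol_{V×W}(· + Aᵢ × B)` vanishes identically on `K(V × W)`. -/
theorem exterior_product_fubini
    {V W : Type*} [NormedAddCommGroup V] [NormedSpace ℝ V] [FiniteDimensional ℝ V]
    [MeasurableSpace V] [BorelSpace V]
    [NormedAddCommGroup W] [NormedSpace ℝ W] [FiniteDimensional ℝ W]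
    [MeasurableSpace W] [BorelSpace W]
    (μV : Measure V) (μW : Measure W) [μV.IsAddHaarMeasure] [μW.IsAddHaarMeasure]
    (m : ℕ) (c : Fin m → ℂ) (A : Fin m → ConvexBody V) (B : ConvexBody W) :
    (∀ K : ConvexBody (V × W),
      ∑ i, c i * (((μV.prod μW)
          ((K + (A i).prodBody B : ConvexBody (V × W)) : Set (V × W))).toReal : ℂ) =
        ∫ w : W, (∑ i, c i * ((μV
          (({v : V | (v, w) ∈ ((K + (ConvexBody.singletonBody (0 : V)).prodBody B :
              ConvexBody (V × W)) : Set (V × W))} + (A i : Set V)))).toReal : ℂ)) ∂μW) ∧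
    ((∀ S : ConvexBody V,
        ∑ i, c i * ((μV ((S + A i : ConvexBody V) : Set V)).toReal : ℂ) = 0) →
      ∀ K : ConvexBody (V × W),
        ∑ i, c i * (((μV.prod μW)
          ((K + (A i).prodBody B : ConvexBody (V × W)) : Set (V × W))).toReal : ℂ) = 0) := by
  have fubini : ∀ K : ConvexBody (V × W),
      ∑ i, c i * (((μV.prod μW)
          ((K + (A i).prodBody B : ConvexBody (V × W)) : Set (V × W))).toReal : ℂ) =
        ∫ w : W, (∑ i, c i * ((μV
          (({v : V | (v, w) ∈ ((K + (ConvexBody.singletonBody (0 : V)).prodBody B :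
              ConvexBody (V × W)) : Set (V × W))} + (A i : Set V)))).toReal : ℂ)) ∂μW := by
    intro K
    simp only [slice_add_prodBody]
    have key := fun i => integrable_slice_and_integral_slice μV μW (K + (A i).prodBody B)
    have hint : ∀ i, Integrable (fun w : W => c i * ((μV {v : V | (v, w) ∈
        ((K + (A i).prodBody B : ConvexBody (V × W)) : Set (V × W))}).toReal : ℂ)) μW :=
      fun i => (key i).1.ofReal.const_mul (c i)
    rw [integral_finsetSum _ fun i _ => hint i]
    refine Finset.sum_congr rfl fun i _ => ?_
    rw [integral_const_mul, integral_complex_ofReal, (key i).2]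
  refine ⟨fubini, fun hzero K => ?_⟩
  rw [fubini K]
  refine integral_eq_zero_of_ae (Filter.Eventually.of_forall fun w => ?_)
  set L : ConvexBody (V × W) := K + (ConvexBody.singletonBody (0 : V)).prodBody B
  rcases Set.eq_empty_or_nonempty {v : V | (v, w) ∈ (L : Set (V × W))} with hempty | hne
  · simp only [hempty, Set.empty_add, measure_empty, ENNReal.toReal_zero, Complex.ofReal_zero,
      mul_zero, Finset.sum_const_zero, Pi.zero_apply]
  · simpa only [ConvexBody.coe_add] using! hzero ⟨_, convex_slice L w, isCompact_slice L w, hne⟩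
end

section
/- Restriction of McMullen's theorem to a single body: for every φ ∈ Val(V) and every K ∈ K(V), the function λ ↦ φ(λK), λ ≥ 0, is a polynomial of degree at most n = dim V: φ(λK) = φ_0(K) + λφ_1(K) + ⋯ + λⁿφ_n(K); moreover each coefficient functional φ_i : K(V) → ℂ so defined is itself a translation invariant continuous valuation, homogeneous of degree i. -/
/-!
The core of the proof is that `c ↦ φ (c • K)` is a polynomial of degree at most `n = dim V` when `K`
is a polytope. Polytopes are dense (`dense_polytopes`), so the Lagrange interpolation formula
expressing `φ (c • K)` by `φ (0 • K), …, φ (n • K)` passes to all convex bodies by continuity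
(`interpolation_formula`). The coefficient functionals are then fixed linear combinations of the
functionals `K ↦ φ (i • K)`, hence translation invariant continuous valuations, and comparing
coefficients in `φ (m • c • K) = φ ((m c) • K)` gives homogeneity.

For a polytope `K` with vertex set `t`, write `K` as the image of the standard simplex of `ℝ^t`
under a linear map `A`. The pullback `S ↦ φ (A S)` is again additive when a compact convex set is
cut by a hyperplane (`isCutFunctional_pullback`), so it suffices to treat the standard simplex `Δ`.
Cutting `(m + 1) Δ` along `x j = 1` leaves a translate of `m Δ`, a translate of a dilated face, and
a part with `x j ≤ 1`. Induction on the number of coordinates that are neither bounded by `1` nor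
set to `0` shows that the difference in `m` is a polynomial for large `m`
(`IsCutFunctional.simplexSlice_polynomial`). Applying this to all scaled copies `(1 / q) • K`, and
using continuity in `c`, gives a polynomial in `c ≥ 0` (`exists_polynomial_of_grids`).

Its degree is only bounded by the number of vertices so far. But `φ` is bounded on bodies contained
in a fixed compact set, by Blaschke selection (`exists_bound_of_subset_compact`), and cutting `m K`
along an integer grid in `V` gives `φ (m K) = O(m ^ n)` (`exists_growth_bound`), so the degree is at
most `n`.
-/

open scoped NNReal Pointwise
open Metric MeasureTheory

/-! ### Convex bodies in the Hausdorff metric -/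

theorem dist_smul_body_le {V : Type*} [NormedAddCommGroup V] [NormedSpace ℝ V]
    (c : ℝ≥0) (K L : ConvexBody V) : dist (c • K) (c • L) ≤ c * dist K L := by
  refine le_of_forall_pos_le_add fun ε hε => ?_
  have hδ : 0 < ε / (c + 1) := by positivity
  have key : ∀ K L : ConvexBody V, ∀ x ∈ ((c • K : ConvexBody V) : Set V),
      ∃ y ∈ ((c • L : ConvexBody V) : Set V), dist x y ≤ c * (dist K L + ε / (c + 1)) := by
    intro K L x hx
    rw [ConvexBody.coe_smul'] at hx
    obtain ⟨k, hk, rfl⟩ := hx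
    obtain ⟨l, hl, hkl⟩ := Metric.exists_dist_lt_of_hausdorffDist_lt (r := dist K L + ε / (c + 1))
      hk (by rw [ConvexBody.hausdorffDist_coe]; linarith)
      (ConvexBody.hausdorffEDist_ne_top (L := L))
    refine ⟨c • l, ⟨l, hl, rfl⟩, ?_⟩
    simp only [NNReal.smul_def, dist_smul₀, Real.norm_eq_abs, NNReal.abs_eq]
    gcongr
  have h1 : dist (c • K) (c • L) ≤ c * (dist K L + ε / (c + 1)) := by
    rw [← ConvexBody.hausdorffDist_coe]
    refine Metric.hausdorffDist_le_of_mem_dist (by positivity) (key K L) ?_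
    have := key L K
    rwa [dist_comm L K] at this
  have h2 : (c : ℝ) * (ε / (c + 1)) ≤ ε := by
    rw [mul_div_assoc', div_le_iff₀ (by positivity)]
    nlinarith [c.coe_nonneg]
  linarith

theorem continuous_smul_body {V : Type*} [NormedAddCommGroup V] [NormedSpace ℝ V] (c : ℝ≥0) :
    Continuous fun K : ConvexBody V => c • K :=
  (LipschitzWith.of_dist_le_mul (K := c) (dist_smul_body_le c)).continuous

theorem continuous_smul_body_left {V : Type*} [NormedAddCommGroup V] [NormedSpace ℝ V]
    (K : ConvexBody V) : Continuous fun c : ℝ≥0 => c • K := by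
  obtain ⟨R, hR0, hR⟩ := K.isBounded.exists_pos_norm_le
  refine (LipschitzWith.of_dist_le_mul (K := ⟨R, hR0.le⟩) fun a b => ?_).continuous
  have key : ∀ a b : ℝ≥0, ∀ x ∈ ((a • K : ConvexBody V) : Set V),
      ∃ y ∈ ((b • K : ConvexBody V) : Set V), dist x y ≤ R * dist a b := by
    intro a b x hx
    rw [ConvexBody.coe_smul'] at hx
    obtain ⟨k, hk, rfl⟩ := hx
    refine ⟨b • k, ⟨k, hk, rfl⟩, ?_⟩
    simp only [NNReal.smul_def]
    rw [dist_eq_norm, ← sub_smul, norm_smul, mul_comm, NNReal.dist_eq, Real.norm_eq_abs]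
    gcongr
    exact hR k hk
  rw [← ConvexBody.hausdorffDist_coe]
  refine Metric.hausdorffDist_le_of_mem_dist (by positivity) (key a b) ?_
  have := key b a
  rwa [dist_comm b a] at this

/-- The set of nonempty compact sets that are convex is closed in the Hausdorff metric. -/
theorem isClosed_convex_nonemptyCompacts {V : Type*} [NormedAddCommGroup V] [NormedSpace ℝ V] :
    IsClosed {L : TopologicalSpace.NonemptyCompacts V | Convex ℝ (L : Set V)} := by
  refine isClosed_of_closure_subset fun L hL => ?_
  rw [Metric.mem_closure_iff] at hL
  intro x hx y hy a b ha hb hab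
  have hLc : IsClosed (L : Set V) := L.isCompact.isClosed
  rw [← hLc.closure_eq, Metric.mem_closure_iff]
  intro ε hε
  obtain ⟨M, hM, hLM⟩ := hL (ε / 2) (by positivity)
  rw [Metric.NonemptyCompacts.dist_eq] at hLM
  have fin : Metric.hausdorffEDist (L : Set V) (M : Set V) ≠ ⊤ :=
    Metric.hausdorffEDist_ne_top_of_nonempty_of_bounded L.nonempty M.nonempty
      L.isCompact.isBounded M.isCompact.isBounded
  obtain ⟨x', hx', hxx⟩ := Metric.exists_dist_lt_of_hausdorffDist_lt hx hLM fin
  obtain ⟨y', hy', hyy⟩ := Metric.exists_dist_lt_of_hausdorffDist_lt hy hLM fin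
  obtain ⟨z, hz, hzz⟩ := Metric.exists_dist_lt_of_hausdorffDist_lt' (hM hx' hy' ha hb hab) hLM fin
  refine ⟨z, hz, ?_⟩
  have h1 : dist (a • x + b • y) (a • x' + b • y') ≤ a * dist x x' + b * dist y y' := by
    refine (dist_add_add_le _ _ _ _).trans ?_
    rw [dist_smul₀, dist_smul₀, Real.norm_of_nonneg ha, Real.norm_of_nonneg hb]
  have h2 : a * dist x x' + b * dist y y' ≤ ε / 2 := by
    calc a * dist x x' + b * dist y y' ≤ a * (ε / 2) + b * (ε / 2) := by gcongr
      _ = ε / 2 := by rw [← add_mul, hab, one_mul]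
  have h3 := dist_triangle (a • x + b • y) (a • x' + b • y') z
  rw [dist_comm] at hzz
  linarith

/-- A form of the Blaschke selection theorem: a continuous functional is bounded on the convex
bodies contained in a fixed compact set. -/
theorem exists_bound_of_subset_compact {V : Type*} [NormedAddCommGroup V] [NormedSpace ℝ V]
    {φ : ConvexBody V → ℂ} (hφ : Continuous φ) {Q : Set V} (hQ : IsCompact Q) :
    ∃ B : ℝ, ∀ K : ConvexBody V, (K : Set V) ⊆ Q → ‖φ K‖ ≤ B := by
  classical
  let 𝒦 : Set (TopologicalSpace.NonemptyCompacts V) :=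
    {L | (L : Set V) ⊆ Q} ∩ {L | Convex ℝ (L : Set V)}
  have h𝒦 : IsCompact 𝒦 :=
    (TopologicalSpace.NonemptyCompacts.isCompact_subsets_of_isCompact hQ).inter_right
      isClosed_convex_nonemptyCompacts
  let toBody : 𝒦 → ConvexBody V := fun L =>
    ⟨(L : TopologicalSpace.NonemptyCompacts V), L.2.2, L.1.isCompact, L.1.nonempty⟩
  have hcont : Continuous toBody := by
    refine Isometry.continuous (Isometry.of_dist_eq fun K L => ?_)
    rw [Subtype.dist_eq, Metric.NonemptyCompacts.dist_eq, ← ConvexBody.hausdorffDist_coe]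
    rfl
  have : CompactSpace 𝒦 := isCompact_iff_compactSpace.mp h𝒦
  obtain ⟨B, hB⟩ := (isCompact_range (hφ.comp hcont)).isBounded.exists_norm_le
  refine ⟨B, fun K hK => hB _ ⟨⟨⟨⟨K, K.isCompact⟩, K.nonempty⟩, hK, K.convex⟩, ?_⟩⟩
  rfl

/-- Polytopes are dense among convex bodies. -/
theorem dense_polytopes {V : Type*} [NormedAddCommGroup V] [NormedSpace ℝ V] :
    Dense {K : ConvexBody V | ∃ t : Set V, t.Finite ∧ (K : Set V) = convexHull ℝ t} := by
  intro K
  rw [Metric.mem_closure_iff]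
  intro ε hε
  obtain ⟨t, htK, htf, ht⟩ := K.isCompact.finite_cover_balls (half_pos hε)
  have hne : (convexHull ℝ t).Nonempty := by
    obtain ⟨x, hx⟩ := K.nonempty
    have := ht hx
    simp only [Set.mem_iUnion] at this
    obtain ⟨y, hy, -⟩ := this
    exact ⟨y, subset_convexHull ℝ t hy⟩
  refine ⟨⟨convexHull ℝ t, convex_convexHull ℝ t, htf.isCompact_convexHull ℝ, hne⟩,
    ⟨t, htf, rfl⟩, ?_⟩
  refine lt_of_le_of_lt ?_ (half_lt_self hε)
  rw [← ConvexBody.hausdorffDist_coe]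
  refine Metric.hausdorffDist_le_of_mem_dist (by positivity) (fun x hx => ?_) fun x hx => ?_
  · have := ht hx
    simp only [Set.mem_iUnion] at this
    obtain ⟨y, hy, hxy⟩ := this
    exact ⟨y, subset_convexHull ℝ t hy, (Metric.mem_ball.mp hxy).le⟩
  · exact ⟨x, convexHull_min htK K.convex hx, by rw [dist_self]; positivity⟩

/-! ### Additivity under hyperplane cuts, and pullbacks along linear maps -/

/-- Extension of a functional on convex bodies to arbitrary sets, by zero on every set that is not
a convex body; in particular it vanishes at the empty set. -/
noncomputable def bodyExt {V : Type*} [NormedAddCommGroup V] [NormedSpace ℝ V]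
    (φ : ConvexBody V → ℂ) (S : Set V) : ℂ :=
  open Classical in
  if h : Convex ℝ S ∧ IsCompact S ∧ S.Nonempty then φ ⟨S, h.1, h.2.1, h.2.2⟩ else 0

theorem bodyExt_coe {V : Type*} [NormedAddCommGroup V] [NormedSpace ℝ V]
    (φ : ConvexBody V → ℂ) (K : ConvexBody V) : bodyExt φ K = φ K := by
  have h : Convex ℝ (K : Set V) ∧ IsCompact (K : Set V) ∧ (K : Set V).Nonempty :=
    ⟨K.convex, K.isCompact, K.nonempty⟩
  rw [bodyExt, dif_pos h]
  rfl

/-- Functionals on subsets of `ℝ^ι` that vanish at `∅`, are translation invariant, and are additive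
on compact convex sets under cuts by the coordinate hyperplanes `x i = c`. -/
structure IsCutFunctional {ι : Type*} (μ : Set (ι → ℝ) → ℂ) : Prop where
  empty : μ ∅ = 0
  translate : ∀ (S : Set (ι → ℝ)) (x : ι → ℝ), μ ((fun y => y + x) '' S) = μ S
  cut : ∀ S : Set (ι → ℝ), IsCompact S → Convex ℝ S → ∀ (i : ι) (c : ℝ),
    μ S = μ (S ∩ {x | x i ≤ c}) + μ (S ∩ {x | c ≤ x i}) - μ (S ∩ {x | x i = c})

theorem exists_coord_eq {ι : Type*} {T : Set (ι → ℝ)} (hT : Convex ℝ T) {x y : ι → ℝ}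
    (hx : x ∈ T) (hy : y ∈ T) {i : ι} {c : ℝ} (hxc : x i ≤ c) (hcy : c ≤ y i) :
    ∃ z ∈ T, z i = c :=
  hT.isPreconnected.intermediate_value hx hy (continuous_apply i).continuousOn ⟨hxc, hcy⟩

theorem bodyExt_translate {V : Type*} [NormedAddCommGroup V] [NormedSpace ℝ V]
    {φ : ConvexBody V → ℂ} (hφ : IsTranslationInvariant φ) (S : Set V) (x : V) :
    bodyExt φ ((fun y => y + x) '' S) = bodyExt φ S := by
  have hS : ∀ (S : Set V) (x : V), Convex ℝ S ∧ IsCompact S ∧ S.Nonempty →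
      Convex ℝ ((fun y => y + x) '' S) ∧ IsCompact ((fun y => y + x) '' S) ∧
        ((fun y => y + x) '' S).Nonempty := by
    rintro S x ⟨h1, h2, h3⟩
    refine ⟨?_, h2.image (by fun_prop), h3.image _⟩
    simpa [add_comm] using h1.translate x
  by_cases h : Convex ℝ S ∧ IsCompact S ∧ S.Nonempty
  · have h' := hS S x h
    rw [bodyExt, dif_pos h', bodyExt, dif_pos h, ← hφ ⟨S, h.1, h.2.1, h.2.2⟩ x]
    congr 1
    ext1
    simp [ConvexBody.singletonBody]
  · have h' : ¬ (Convex ℝ ((fun y => y + x) '' S) ∧ IsCompact ((fun y => y + x) '' S) ∧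
        ((fun y => y + x) '' S).Nonempty) := by
      intro h'
      apply h
      have := hS _ (-x) h'
      rw [Set.image_image] at this
      simpa only [add_neg_cancel_right, Set.image_id'] using this
    rw [bodyExt, dif_neg h', bodyExt, dif_neg h]

/-- The pullback of a valuation along a linear map is additive under cuts. Although images do not
commute with intersections in general, they do for two convex pieces of a convex set: a segment
joining points of both pieces inside a fibre meets the cutting hyperplane. -/
theorem isCutFunctional_pullback {V : Type*} [NormedAddCommGroup V] [NormedSpace ℝ V]
    {φ : ConvexBody V → ℂ} (hφ : MemVal φ) {ι : Type*} [Finite ι] (A : (ι → ℝ) →ₗ[ℝ] V) :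
    IsCutFunctional fun S => bodyExt φ (A '' S) := by
  have hA : Continuous A := A.continuous_of_finiteDimensional
  have hempty : bodyExt φ ∅ = 0 := by simp [bodyExt]
  refine ⟨?_, fun S x => ?_, fun S hS hSc i c => ?_⟩
  · simpa only [Set.image_empty] using hempty
  · rw [← bodyExt_translate hφ.2.1 (A '' S) (A x), Set.image_image, Set.image_image]
    simp
  · have hle : IsClosed {x : ι → ℝ | x i ≤ c} := isClosed_le (continuous_apply i) continuous_const
    have hge : IsClosed {x : ι → ℝ | c ≤ x i} := isClosed_le continuous_const (continuous_apply i)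
    have heq : IsClosed {x : ι → ℝ | x i = c} := isClosed_eq (continuous_apply i) continuous_const
    have hlin : IsLinearMap ℝ fun x : ι → ℝ => x i := ⟨fun _ _ => rfl, fun _ _ => rfl⟩
    have cle : Convex ℝ {x : ι → ℝ | x i ≤ c} := convex_halfSpace_le hlin c
    have cge : Convex ℝ {x : ι → ℝ | c ≤ x i} := convex_halfSpace_ge hlin c
    have ceq : Convex ℝ {x : ι → ℝ | x i = c} := convex_hyperplane hlin c
    rcases (S ∩ {x | x i ≤ c}).eq_empty_or_nonempty with h1 | ⟨x, hx⟩
    · have h0 : S ∩ {x | x i = c} = ∅ := by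
        rw [Set.eq_empty_iff_forall_notMem] at h1 ⊢
        exact fun x hx => h1 x ⟨hx.1, le_of_eq hx.2⟩
      have h2 : S ∩ {x | c ≤ x i} = S := by
        rw [Set.inter_eq_left]
        intro x hx
        by_contra hc
        exact (Set.eq_empty_iff_forall_notMem.mp h1) x ⟨hx, (le_total (x i) c).resolve_right hc⟩
      simp only [h0, h1, h2, Set.image_empty, hempty]
      ring
    rcases (S ∩ {x | c ≤ x i}).eq_empty_or_nonempty with h1 | ⟨y, hy⟩
    · have h0 : S ∩ {x | x i = c} = ∅ := by
        rw [Set.eq_empty_iff_forall_notMem] at h1 ⊢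
        exact fun x hx => h1 x ⟨hx.1, ge_of_eq hx.2⟩
      have h2 : S ∩ {x | x i ≤ c} = S := by
        rw [Set.inter_eq_left]
        intro x hx
        by_contra hc
        exact (Set.eq_empty_iff_forall_notMem.mp h1) x ⟨hx, (le_total (x i) c).resolve_left hc⟩
      simp only [h0, h1, h2, Set.image_empty, hempty]
      ring
    obtain ⟨z, hz, hzc⟩ := exists_coord_eq hSc hx.1 hy.1 hx.2 hy.2
    let KC : ConvexBody V := ⟨A '' S, hSc.linear_image A, hS.image hA, ⟨A x, x, hx.1, rfl⟩⟩
    let KA : ConvexBody V := ⟨A '' (S ∩ {x | x i ≤ c}), (hSc.inter cle).linear_image A,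
      (hS.inter_right hle).image hA, ⟨A x, x, hx, rfl⟩⟩
    let KB : ConvexBody V := ⟨A '' (S ∩ {x | c ≤ x i}), (hSc.inter cge).linear_image A,
      (hS.inter_right hge).image hA, ⟨A y, y, hy, rfl⟩⟩
    let KD : ConvexBody V := ⟨A '' (S ∩ {x | x i = c}), (hSc.inter ceq).linear_image A,
      (hS.inter_right heq).image hA, ⟨A z, z, ⟨hz, hzc⟩, rfl⟩⟩
    have hU : (KC : Set V) = (KA : Set V) ∪ (KB : Set V) := by
      change A '' S = A '' (S ∩ {x | x i ≤ c}) ∪ A '' (S ∩ {x | c ≤ x i})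
      rw [← Set.image_union, ← Set.inter_union_distrib_left]
      congr 1
      symm
      rw [Set.inter_eq_left]
      exact fun x _ => le_total (x i) c
    have hI : (KD : Set V) = (KA : Set V) ∩ (KB : Set V) := by
      change A '' (S ∩ {x | x i = c}) = A '' (S ∩ {x | x i ≤ c}) ∩ A '' (S ∩ {x | c ≤ x i})
      apply Set.Subset.antisymm
      · rintro _ ⟨w, ⟨hw, hwc⟩, rfl⟩
        exact ⟨⟨w, ⟨hw, le_of_eq hwc⟩, rfl⟩, ⟨w, ⟨hw, ge_of_eq hwc⟩, rfl⟩⟩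
      · rintro _ ⟨⟨u, ⟨hu, huc⟩, rfl⟩, ⟨v, ⟨hv, hvc⟩, hvu⟩⟩
        have hT : Convex ℝ (S ∩ A ⁻¹' {A u}) :=
          hSc.inter ((convex_singleton (A u)).linear_preimage A)
        obtain ⟨w, hw, hwc⟩ := exists_coord_eq hT ⟨hu, rfl⟩ ⟨hv, hvu⟩ huc hvc
        exact ⟨w, ⟨hw.1, hwc⟩, hw.2⟩
    have := hφ.1 KA KB KC KD hU hI
    rw [← bodyExt_coe φ KA, ← bodyExt_coe φ KB, ← bodyExt_coe φ KC, ← bodyExt_coe φ KD] at this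
    exact this

/-! ### Dilates of the standard simplex -/

open Polynomial in
/-- Every polynomial is a forward difference: Bernoulli polynomials give the antiderivatives of
monomials. -/
theorem exists_discrete_antiderivative (p : ℂ[X]) :
    ∃ Q : ℂ[X], ∀ x : ℂ, Q.eval (x + 1) - Q.eval x = p.eval x := by
  have hb (n : ℕ) (x : ℂ) : ((Polynomial.bernoulli n).map (algebraMap ℚ ℂ)).eval (x + 1) -
      ((Polynomial.bernoulli n).map (algebraMap ℚ ℂ)).eval x = n * x ^ (n - 1) := by
    have h : (Polynomial.bernoulli n).comp (X + 1) - Polynomial.bernoulli n = (n : ℚ[X]) * X ^ (n - 1) := by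
      refine Polynomial.funext fun r => ?_
      have := Polynomial.bernoulli_eval_one_add n r
      simp only [eval_sub, eval_comp, eval_add, eval_X, eval_one, eval_mul, eval_natCast, eval_pow]
      rw [add_comm r 1, this]
      ring
    have h' := congrArg (fun q : ℚ[X] => (q.map (algebraMap ℚ ℂ)).eval x) h
    simpa [Polynomial.map_comp, eval_comp] using h'
  induction p using Polynomial.induction_on' with
  | add p q hp hq =>
    obtain ⟨P, hP⟩ := hp
    obtain ⟨Q, hQ⟩ := hq
    refine ⟨P + Q, fun x => ?_⟩
    rw [eval_add, eval_add, eval_add, ← hP, ← hQ]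
    ring
  | monomial n a =>
    refine ⟨C (a / (n + 1 : ℕ)) * (Polynomial.bernoulli (n + 1)).map (algebraMap ℚ ℂ), fun x => ?_⟩
    have hn : ((n + 1 : ℕ) : ℂ) ≠ 0 := by exact_mod_cast Nat.succ_ne_zero n
    rw [eval_mul, eval_mul, eval_C, eval_C, ← mul_sub, hb, eval_monomial, Nat.add_sub_cancel]
    field_simp

/-- Slices of the dilated standard simplex `m Δ`, with upper bound `1` imposed on the coordinates
in `J` and the coordinates in `Z` set to zero. -/
def simplexSlice {ι : Type*} [Fintype ι] (J Z : Finset ι) (m : ℕ) : Set (ι → ℝ) :=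
  {x | (∀ i, 0 ≤ x i) ∧ ∑ i, x i = m ∧ (∀ i ∈ J, x i ≤ 1) ∧ ∀ i ∈ Z, x i = 0}

theorem convex_simplexSlice {ι : Type*} [Fintype ι] (J Z : Finset ι) (m : ℕ) :
    Convex ℝ (simplexSlice J Z m) := by
  rintro x ⟨hx0, hxs, hxJ, hxZ⟩ y ⟨hy0, hys, hyJ, hyZ⟩ a b ha hb hab
  refine ⟨fun i => ?_, ?_, fun i hi => ?_, fun i hi => ?_⟩
  · have := hx0 i
    have := hy0 i
    simp only [Pi.add_apply, Pi.smul_apply, smul_eq_mul]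
    positivity
  · simp only [Pi.add_apply, Pi.smul_apply, smul_eq_mul, Finset.sum_add_distrib, ← Finset.mul_sum,
      hxs, hys]
    rw [← add_mul, hab, one_mul]
  · simp only [Pi.add_apply, Pi.smul_apply, smul_eq_mul]
    nlinarith [mul_le_mul_of_nonneg_left (hxJ i hi) ha, mul_le_mul_of_nonneg_left (hyJ i hi) hb]
  · simp [hxZ i hi, hyZ i hi]

theorem isCompact_simplexSlice {ι : Type*} [Fintype ι] (J Z : Finset ι) (m : ℕ) :
    IsCompact (simplexSlice J Z m) := by
  refine (isCompact_Icc (a := (0 : ι → ℝ)) (b := fun _ => (m : ℝ))).of_isClosed_subset ?_ ?_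
  · simp only [simplexSlice, Set.ofPred_and, Set.ofPred_forall]
    refine ((isClosed_iInter fun i => isClosed_le continuous_const (continuous_apply i))).inter
      ((isClosed_eq (by fun_prop) continuous_const).inter
      ((isClosed_iInter fun i => isClosed_iInter fun _ =>
        isClosed_le (continuous_apply i) continuous_const).inter
      (isClosed_iInter fun i => isClosed_iInter fun _ =>
        isClosed_eq (continuous_apply i) continuous_const)))
  · rintro x ⟨hx0, hxs, -, -⟩
    refine ⟨hx0, fun i => ?_⟩
    change x i ≤ (m : ℝ)
    rw [← hxs]
    exact Finset.single_le_sum (fun j _ => hx0 j) (Finset.mem_univ i)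

/-- Cutting a slice along `x j = 1`; the part with `x j ≥ 1` is a translate of a slice of the
simplex of size one less. -/
theorem IsCutFunctional.simplexSlice_succ {ι : Type*} [Fintype ι] [DecidableEq ι]
    {μ : Set (ι → ℝ) → ℂ} (hμ : IsCutFunctional μ) {J Z : Finset ι} {j : ι} (hjJ : j ∉ J)
    (hjZ : j ∉ Z) (m : ℕ) :
    μ (simplexSlice J Z (m + 1)) - μ (simplexSlice J Z m) =
      μ (simplexSlice (insert j J) Z (m + 1)) - μ (simplexSlice J (insert j Z) m) := by
  have h1 : simplexSlice J Z (m + 1) ∩ {x | x j ≤ 1} = simplexSlice (insert j J) Z (m + 1) := by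
    ext x
    simp only [simplexSlice, Set.mem_inter_iff, Set.mem_ofPred_eq, Finset.forall_mem_insert]
    tauto
  have hsum : ∀ x : ι → ℝ, ∑ i, (x + Pi.single j 1 : ι → ℝ) i = (∑ i, x i) + 1 := fun x => by
    simp [Finset.sum_add_distrib]
  have hne : ∀ (x : ι → ℝ) (i : ι), i ≠ j → (x + Pi.single j 1 : ι → ℝ) i = x i := fun x i hi => by
    simp [hi]
  have hself : ∀ x : ι → ℝ, (x + Pi.single j 1 : ι → ℝ) j = x j + 1 := fun x => by simp
  have hiff : ∀ x : ι → ℝ, (x + Pi.single j 1 ∈ simplexSlice J Z (m + 1) ∩ {x | 1 ≤ x j}) ↔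
      x ∈ simplexSlice J Z m := by
    intro x
    simp only [simplexSlice, Set.mem_inter_iff, Set.mem_ofPred_eq, hsum, hself, Nat.cast_add,
      Nat.cast_one, add_left_inj]
    constructor
    · rintro ⟨⟨h0, hs, hJ, hZ⟩, h⟩
      refine ⟨fun i => ?_, hs, fun i hi => ?_, fun i hi => ?_⟩
      · by_cases hij : i = j
        · subst hij
          linarith
        · rw [← hne x i hij]
          exact h0 i
      · rw [← hne x i (ne_of_mem_of_not_mem hi hjJ)]
        exact hJ i hi
      · rw [← hne x i (ne_of_mem_of_not_mem hi hjZ)]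
        exact hZ i hi
    · rintro ⟨h0, hs, hJ, hZ⟩
      refine ⟨⟨fun i => ?_, hs, fun i hi => ?_, fun i hi => ?_⟩, by linarith [h0 j]⟩
      · by_cases hij : i = j
        · subst hij
          rw [hself]
          linarith [h0 i]
        · rw [hne x i hij]
          exact h0 i
      · rw [hne x i (ne_of_mem_of_not_mem hi hjJ)]
        exact hJ i hi
      · rw [hne x i (ne_of_mem_of_not_mem hi hjZ)]
        exact hZ i hi
  have h2 : simplexSlice J Z (m + 1) ∩ {x | 1 ≤ x j} =
      (fun y => y + Pi.single j 1) '' simplexSlice J Z m := by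
    ext x
    constructor
    · intro hx
      refine ⟨x - Pi.single j 1, (hiff _).mp ?_, by simp⟩
      rwa [sub_add_cancel]
    · rintro ⟨y, hy, rfl⟩
      exact (hiff y).mpr hy
  have h3 : simplexSlice J Z (m + 1) ∩ {x | x j = 1} =
      (fun y => y + Pi.single j 1) '' simplexSlice J (insert j Z) m := by
    have hZ : simplexSlice J (insert j Z) m = simplexSlice J Z m ∩ {x | x j = 0} := by
      ext x
      simp only [simplexSlice, Set.mem_inter_iff, Set.mem_ofPred_eq, Finset.forall_mem_insert]
      tauto
    have hE : simplexSlice J Z (m + 1) ∩ {x | x j = 1} =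
        (simplexSlice J Z (m + 1) ∩ {x | 1 ≤ x j}) ∩ {x | x j = 1} := by
      ext x
      simp only [Set.mem_inter_iff, Set.mem_ofPred_eq]
      exact ⟨fun h => ⟨⟨h.1, ge_of_eq h.2⟩, h.2⟩, fun h => ⟨h.1.1, h.2⟩⟩
    rw [hE, h2, hZ]
    ext x
    constructor
    · rintro ⟨⟨y, hy, rfl⟩, hxj⟩
      refine ⟨y, ⟨hy, ?_⟩, rfl⟩
      simpa using hxj
    · rintro ⟨y, ⟨hy, hyj⟩, rfl⟩
      refine ⟨⟨y, hy, rfl⟩, ?_⟩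
      simpa using hyj
  rw [hμ.cut _ (isCompact_simplexSlice J Z (m + 1)) (convex_simplexSlice J Z (m + 1)) j 1, h1, h2,
    h3, hμ.translate, hμ.translate]
  ring

/-- Induction on the number `u` of unconstrained coordinates. For `u = 0` the slices of size larger
than the number of coordinates are empty; each step integrates a polynomial difference. -/
theorem IsCutFunctional.simplexSlice_polynomial {ι : Type*} [Fintype ι] [DecidableEq ι]
    {μ : Set (ι → ℝ) → ℂ} (hμ : IsCutFunctional μ) (u : ℕ) (J Z : Finset ι) (hJZ : Disjoint J Z)
    (hu : (J ∪ Z).card + u = Fintype.card ι) :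
    ∃ p : Polynomial ℂ, ∀ m : ℕ, Fintype.card ι + 1 ≤ m →
      μ (simplexSlice J Z m) = p.eval (m : ℂ) := by
  induction u generalizing J Z with
  | zero =>
    have huniv : J ∪ Z = Finset.univ := by
      rw [← Finset.card_eq_iff_eq_univ]
      simpa using hu
    refine ⟨0, fun m hm => ?_⟩
    have : simplexSlice J Z m = ∅ := by
      rw [Set.eq_empty_iff_forall_notMem]
      rintro x ⟨hx0, hxs, hxJ, hxZ⟩
      have h1 : ∀ i, x i ≤ 1 := fun i => by
        have hi : i ∈ J ∪ Z := huniv ▸ Finset.mem_univ i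
        rcases Finset.mem_union.mp hi with h | h
        · exact hxJ i h
        · rw [hxZ i h]
          exact zero_le_one
      have h2 : ∑ i, x i ≤ ∑ _i : ι, (1 : ℝ) := Finset.sum_le_sum fun i _ => h1 i
      rw [hxs] at h2
      have h3 : (m : ℝ) ≤ (Fintype.card ι : ℕ) := by simpa using h2
      have h4 : m ≤ Fintype.card ι := by exact_mod_cast h3
      omega
    rw [this, hμ.empty, Polynomial.eval_zero]
  | succ u ih =>
    obtain ⟨j, hj⟩ : ∃ j, j ∉ J ∪ Z := by
      by_contra! h
      have : J ∪ Z = Finset.univ := Finset.eq_univ_iff_forall.mpr h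
      rw [this, Finset.card_univ] at hu
      omega
    have hjJ : j ∉ J := fun h => hj (Finset.mem_union_left _ h)
    have hjZ : j ∉ Z := fun h => hj (Finset.mem_union_right _ h)
    obtain ⟨p, hp⟩ := ih (insert j J) Z (Finset.disjoint_insert_left.mpr ⟨hjZ, hJZ⟩) (by
      rw [Finset.insert_union, Finset.card_insert_of_notMem hj]
      omega)
    obtain ⟨q, hq⟩ := ih J (insert j Z) (Finset.disjoint_insert_right.mpr ⟨hjJ, hJZ⟩) (by
      rw [Finset.union_insert, Finset.card_insert_of_notMem hj]
      omega)
    obtain ⟨Q, hQ⟩ := exists_discrete_antiderivative (p.comp (Polynomial.X + 1) - q)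
    set M := Fintype.card ι + 1 with hM
    refine ⟨Q + Polynomial.C (μ (simplexSlice J Z M) - Q.eval (M : ℂ)), fun m hm => ?_⟩
    induction m, hm using Nat.le_induction with
    | base => simp
    | succ m hm ihm =>
      have h1 := hμ.simplexSlice_succ hjJ hjZ m
      rw [hp (m + 1) (by omega), hq m hm, ihm] at h1
      have h2 := hQ m
      simp only [Polynomial.eval_sub, Polynomial.eval_comp, Polynomial.eval_add, Polynomial.eval_X,
        Polynomial.eval_one, Polynomial.eval_C, Nat.cast_add, Nat.cast_one] at h1 h2 ⊢
      linear_combination h1 - h2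

/-! ### Growth of a valuation under dilation -/

/-- Cutting `S` along `x i = a, a + 1, …, a + N - 1` expresses `μ S` by `2 N + 1` values of `μ`
on pieces of width at most one in the direction `i`. -/
theorem IsCutFunctional.slab_bound {ι : Type*} {μ : Set (ι → ℝ) → ℂ} (hμ : IsCutFunctional μ)
    (i : ι) {D : ℝ} (N : ℕ) (a : ℝ) (S : Set (ι → ℝ)) (hS : IsCompact S) (hSc : Convex ℝ S)
    (hSa : ∀ x ∈ S, a ≤ x i ∧ x i ≤ a + N)
    (hD : ∀ T ⊆ S, IsCompact T → Convex ℝ T → ∀ c : ℝ, (∀ x ∈ T, c ≤ x i ∧ x i ≤ c + 1) →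
      ‖μ T‖ ≤ D) :
    ‖μ S‖ ≤ (2 * N + 1) * D := by
  induction N generalizing S with
  | zero =>
    have := hD S subset_rfl hS hSc a fun x hx => ⟨(hSa x hx).1, by
      have := (hSa x hx).2
      simp only [Nat.cast_zero] at this
      linarith⟩
    simpa using this
  | succ N ih =>
    have hle : IsClosed {x : ι → ℝ | x i ≤ a + N} :=
      isClosed_le (continuous_apply i) continuous_const
    have hge : IsClosed {x : ι → ℝ | a + N ≤ x i} :=
      isClosed_le continuous_const (continuous_apply i)
    have heq : IsClosed {x : ι → ℝ | x i = a + N} :=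
      isClosed_eq (continuous_apply i) continuous_const
    have hlin : IsLinearMap ℝ fun x : ι → ℝ => x i := ⟨fun _ _ => rfl, fun _ _ => rfl⟩
    have cle : Convex ℝ {x : ι → ℝ | x i ≤ a + N} := convex_halfSpace_le hlin _
    have cge : Convex ℝ {x : ι → ℝ | a + N ≤ x i} := convex_halfSpace_ge hlin _
    have ceq : Convex ℝ {x : ι → ℝ | x i = a + N} := convex_hyperplane hlin _
    have h1 := ih (S ∩ {x | x i ≤ a + N}) (hS.inter_right hle) (hSc.inter cle)
      (fun x hx => ⟨(hSa x hx.1).1, hx.2⟩)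
      fun T hT => hD T (hT.trans Set.inter_subset_left)
    have h2 := hD (S ∩ {x | a + N ≤ x i}) Set.inter_subset_left (hS.inter_right hge)
      (hSc.inter cge) (a + N) fun x hx => ⟨hx.2, by
        have := (hSa x hx.1).2
        push_cast at this
        linarith⟩
    have h3 := hD (S ∩ {x | x i = a + N}) Set.inter_subset_left (hS.inter_right heq)
      (hSc.inter ceq) (a + N) fun x hx => by
        have h : x i = a + N := hx.2
        constructor <;> linarith
    rw [hμ.cut S hS hSc i (a + N)]
    have h4 := norm_sub_le (μ (S ∩ {x | x i ≤ a + N}) + μ (S ∩ {x | a + N ≤ x i}))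
      (μ (S ∩ {x | x i = a + N}))
    have h5 := norm_add_le (μ (S ∩ {x | x i ≤ a + N})) (μ (S ∩ {x | a + N ≤ x i}))
    push_cast
    linarith

/-- A bound on subsets of unit cubes propagates to boxes by cutting along the integer grid, one
coordinate of `I` at a time. -/
theorem IsCutFunctional.box_bound {ι : Type*} [DecidableEq ι] {μ : Set (ι → ℝ) → ℂ}
    (hμ : IsCutFunctional μ) {B : ℝ}
    (hB : ∀ T : Set (ι → ℝ), IsCompact T → Convex ℝ T → ∀ a : ι → ℝ,
      (∀ x ∈ T, ∀ i, a i ≤ x i ∧ x i ≤ a i + 1) → ‖μ T‖ ≤ B)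
    (N : ℕ) (I : Finset ι) (a : ι → ℝ) (S : Set (ι → ℝ)) (hS : IsCompact S) (hSc : Convex ℝ S)
    (hSa : ∀ x ∈ S, ∀ i, a i ≤ x i ∧ x i ≤ a i + if i ∈ I then (N : ℝ) else 1) :
    ‖μ S‖ ≤ (2 * N + 1) ^ I.card * B := by
  induction I using Finset.induction_on generalizing a S with
  | empty => simpa using hB S hS hSc a (by simpa using hSa)
  | insert i I hi ih =>
    rw [Finset.card_insert_of_notMem hi, pow_succ', mul_assoc]
    refine hμ.slab_bound i N (a i) S hS hSc (fun x hx => by simpa using hSa x hx i) ?_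
    intro T hTS hT hTc c hc
    refine ih (Function.update a i c) T hT hTc fun x hx k => ?_
    by_cases hk : k = i
    · subst hk
      simpa [hi] using hc x hx
    · simpa [hk] using hSa x (hTS hx) k

theorem norm_bodyExt_le {V : Type*} [NormedAddCommGroup V] [NormedSpace ℝ V]
    {φ : ConvexBody V → ℂ} {Q : Set V} {B : ℝ} (hB0 : 0 ≤ B)
    (hB : ∀ K : ConvexBody V, (K : Set V) ⊆ Q → ‖φ K‖ ≤ B) {S : Set V} (hS : S ⊆ Q) :
    ‖bodyExt φ S‖ ≤ B := by
  unfold bodyExt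
  split_ifs with h
  · exact hB _ hS
  · simpa using hB0

/-- A linear image of a box of side length proportional to `m` contains `m • K`, and `φ` is bounded
on the bodies inside a unit cube, by compactness and translation invariance. -/
theorem exists_growth_bound {V : Type*} [NormedAddCommGroup V] [NormedSpace ℝ V]
    [FiniteDimensional ℝ V] {φ : ConvexBody V → ℂ} (hφ : MemVal φ) (K : ConvexBody V) :
    ∃ C : ℝ, ∀ m : ℕ, 1 ≤ m → ‖φ ((m : ℝ≥0) • K)‖ ≤ C * (m : ℝ) ^ Module.finrank ℝ V := by
  classical
  let e := (Module.finBasis ℝ V).equivFun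
  let A : (Fin (Module.finrank ℝ V) → ℝ) →ₗ[ℝ] V := e.symm.toLinearMap
  have hA : Continuous A := A.continuous_of_finiteDimensional
  have he : Continuous e := e.toLinearMap.continuous_of_finiteDimensional
  have hμ := isCutFunctional_pullback hφ A
  obtain ⟨B₀, hB₀⟩ := exists_bound_of_subset_compact hφ.2.2
    ((isCompact_Icc (a := (0 : Fin (Module.finrank ℝ V) → ℝ)) (b := 1)).image hA)
  set B := max B₀ 0 with hBdef
  have hB0 : 0 ≤ B := le_max_right _ _
  have hcube : ∀ T : Set (Fin (Module.finrank ℝ V) → ℝ), IsCompact T → Convex ℝ T →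
      ∀ a : Fin (Module.finrank ℝ V) → ℝ,
      (∀ x ∈ T, ∀ i, a i ≤ x i ∧ x i ≤ a i + 1) → ‖bodyExt φ (A '' T)‖ ≤ B := by
    intro T _ _ a ha
    have htr := hμ.translate T (-a)
    rw [← htr]
    refine norm_bodyExt_le hB0 (fun L hL => (hB₀ L hL).trans (le_max_left _ _))
      (Set.image_mono ?_)
    rintro _ ⟨x, hx, rfl⟩
    refine ⟨fun i => ?_, fun i => ?_⟩
    · have := (ha x hx i).1
      simpa using this
    · have := (ha x hx i).2
      simp only [Pi.add_apply, Pi.neg_apply, Pi.one_apply]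
      linarith
  obtain ⟨R₀, hR₀⟩ := (K.isCompact.image he).isBounded.exists_norm_le
  obtain ⟨R, hR⟩ := exists_nat_ge R₀
  have hRK : ∀ x ∈ (K : Set V), ∀ i, |e x i| ≤ R := fun x hx i =>
    ((norm_le_pi_norm (e x) i).trans (hR₀ _ ⟨x, hx, rfl⟩)).trans hR
  refine ⟨(4 * R + 1) ^ Module.finrank ℝ V * B, fun m hm => ?_⟩
  have hm' : (1 : ℝ) ≤ m := by exact_mod_cast hm
  let S : Set (Fin (Module.finrank ℝ V) → ℝ) := e '' (((m : ℝ≥0) • K : ConvexBody V) : Set V)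
  have hAS : A '' S = (((m : ℝ≥0) • K : ConvexBody V) : Set V) := by
    simp only [S, Set.image_image]
    simp [A]
  have hbox := hμ.box_bound hcube (2 * R * m) Finset.univ (fun _ => -((R : ℝ) * m)) S
    (((m : ℝ≥0) • K).isCompact.image he) (((m : ℝ≥0) • K).convex.linear_image e.toLinearMap) (by
      rintro _ ⟨y, hy, rfl⟩ i
      rw [ConvexBody.coe_smul'] at hy
      obtain ⟨x, hx, hxy⟩ := hy
      have h1 := abs_le.mp (hRK x hx i)
      have h2 : e y i = m * e x i := by
        rw [← hxy]
        change e ((m : ℝ≥0) • x) i = m * e x i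
        rw [NNReal.smul_def, map_smul]
        simp
      simp only [Finset.mem_univ, if_true, h2]
      push_cast
      constructor <;> nlinarith)
  simp only [hAS, bodyExt_coe, Finset.card_univ, Fintype.card_fin] at hbox
  refine hbox.trans ?_
  push_cast
  calc (2 * (2 * (R : ℝ) * m) + 1) ^ Module.finrank ℝ V * B
      ≤ ((4 * R + 1) * m) ^ Module.finrank ℝ V * B := by
        gcongr
        nlinarith
    _ = (4 * R + 1) ^ Module.finrank ℝ V * B * (m : ℝ) ^ Module.finrank ℝ V := by
        rw [mul_pow]
        ring

open Polynomial in
theorem norm_eval_natCast_le {r : ℂ[X]} {n : ℕ} (hr : r.natDegree ≤ n) {m : ℕ} (hm : 1 ≤ m) :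
    ‖r.eval (m : ℂ)‖ ≤ (∑ i ∈ Finset.range (n + 1), ‖r.coeff i‖) * (m : ℝ) ^ n := by
  have hm' : (1 : ℝ) ≤ m := by exact_mod_cast hm
  rw [eval_eq_sum_range' (Nat.lt_succ_of_le hr), Finset.sum_mul]
  refine norm_sum_le_of_le _ fun i hi => ?_
  rw [norm_mul, norm_pow, Complex.norm_natCast]
  have : i ≤ n := Nat.lt_succ_iff.mp (Finset.mem_range.mp hi)
  gcongr

open Polynomial in
/-- Divide with remainder by `X ^ n`: the quotient is bounded on the positive integers, hence
constant. -/
theorem natDegree_le_of_growth {p : ℂ[X]} {n : ℕ} {C₀ : ℝ}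
    (h : ∀ m : ℕ, 1 ≤ m → ‖p.eval (m : ℂ)‖ ≤ C₀ * (m : ℝ) ^ n) : p.natDegree ≤ n := by
  by_contra! hn
  have hmonic : (X ^ n : ℂ[X]).Monic := monic_X_pow n
  set q := p /ₘ X ^ n with hq
  set r := p %ₘ X ^ n with hr
  have hqdeg : 0 < q.degree := by
    rw [← natDegree_pos_iff_degree_pos, hq, natDegree_divByMonic p hmonic, natDegree_X_pow]
    omega
  have hrdeg : r.natDegree ≤ n := by
    have := natDegree_modByMonic_le p hmonic
    rwa [natDegree_X_pow] at this
  have hdecomp : r + X ^ n * q = p := modByMonic_add_div p (X ^ n)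
  set D := ∑ i ∈ Finset.range (n + 1), ‖r.coeff i‖
  have hbound : ∀ m : ℕ, 1 ≤ m → ‖q.eval (m : ℂ)‖ ≤ C₀ + D := by
    intro m hm
    have hm' : (0 : ℝ) < (m : ℝ) ^ n := by
      have : (0 : ℝ) < m := by exact_mod_cast hm
      positivity
    have h1 : (m : ℂ) ^ n * q.eval (m : ℂ) = p.eval (m : ℂ) - r.eval (m : ℂ) := by
      rw [← hdecomp]
      simp
    have h2 : (m : ℝ) ^ n * ‖q.eval (m : ℂ)‖ ≤ (m : ℝ) ^ n * (C₀ + D) := by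
      have h3 := congrArg norm h1
      rw [norm_mul, norm_pow, Complex.norm_natCast] at h3
      rw [h3]
      have h4 := norm_sub_le (p.eval (m : ℂ)) (r.eval (m : ℂ))
      have h5 := h m hm
      have h6 := norm_eval_natCast_le hrdeg hm
      linarith
    exact le_of_mul_le_mul_left h2 hm'
  have htend : Filter.Tendsto (fun m : ℕ => ‖q.eval (m : ℂ)‖) Filter.atTop Filter.atTop := by
    refine q.tendsto_norm_atTop hqdeg ?_
    simp only [Complex.norm_natCast]
    exact tendsto_natCast_atTop_atTop
  obtain ⟨m, hm1, hm2⟩ := ((htend.eventually_gt_atTop (C₀ + D)).and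
    (Filter.eventually_ge_atTop 1)).exists
  exact absurd (hbound m hm2) (not_le.mpr hm1)

/-! ### Polynomiality for polytopes -/

open Polynomial in
/-- If a continuous function on `[0, ∞)` agrees on each grid `a ℕ`, from the `M`-th grid point on,
with a polynomial in the grid index, then it is a polynomial. Only the grids with `a = 1 / q` are
used; that `M` does not depend on `a` lets the grid points accumulate at every `x ≥ 0`. -/
theorem exists_polynomial_of_grids {f : ℝ≥0 → ℂ} (hf : Continuous f) (M : ℕ)
    (h : ∀ a : ℝ≥0, ∃ p : ℂ[X], ∀ m : ℕ, M ≤ m → f (m * a) = p.eval (m : ℂ)) :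
    ∃ p : ℂ[X], ∀ x : ℝ≥0, f x = p.eval ((x : ℝ) : ℂ) := by
  obtain ⟨p, hp⟩ := h 1
  simp only [mul_one] at hp
  have hgrid : ∀ q : ℕ, 1 ≤ q → ∀ m : ℕ, M ≤ m →
      f (m / q) = p.eval ((((m : ℝ≥0) / (q : ℝ≥0) : ℝ≥0) : ℝ) : ℂ) := by
    intro q hq m hm
    have hq0 : (q : ℝ≥0) ≠ 0 := by exact_mod_cast (by omega : q ≠ 0)
    have hq0' : (q : ℂ) ≠ 0 := by exact_mod_cast (by omega : q ≠ 0)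
    obtain ⟨r, hr⟩ := h (q : ℝ≥0)⁻¹
    -- Both polynomials describe `f` at the integers `j ≥ M`, which determines them.
    have heq : r.comp (C (q : ℂ) * X) = p := by
      refine eq_of_infinite_eval_eq _ _
        (Set.Infinite.mono (s := (fun j : ℕ => (j : ℂ)) '' Set.Ici M) ?_ ((Set.Ici_infinite M).image Nat.cast_injective.injOn))
      rintro _ ⟨j, hj, rfl⟩
      have hj' : M ≤ j := hj
      change eval (j : ℂ) (r.comp (C (q : ℂ) * X)) = eval (j : ℂ) p
      rw [← hp j hj', eval_comp, eval_mul, eval_C, eval_X]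
      have h1 := hr (q * j) (hj'.trans (Nat.le_mul_of_pos_left j hq))
      push_cast at h1
      rw [← h1]
      congr 1
      field_simp
    rw [div_eq_mul_inv, hr m hm, ← heq, eval_comp, eval_mul, eval_C, eval_X]
    congr 1
    push_cast
    field_simp
  refine ⟨p, fun x => ?_⟩
  let u : ℕ → ℝ≥0 := fun q => ((⌊(x : ℝ) * (q : ℝ)⌋₊ + M : ℕ) : ℝ≥0) / (q : ℝ≥0)
  have hu : Filter.Tendsto u Filter.atTop (nhds x) := by
    rw [← NNReal.tendsto_coe]
    have h1 : Filter.Tendsto (fun q : ℕ => (⌊(x : ℝ) * (q : ℝ)⌋₊ : ℝ) / (q : ℝ)) Filter.atTop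
        (nhds (x : ℝ)) :=
      (tendsto_nat_floor_mul_div_atTop x.coe_nonneg).comp tendsto_natCast_atTop_atTop
    have h2 : Filter.Tendsto (fun q : ℕ => (M : ℝ) / (q : ℝ)) Filter.atTop (nhds 0) :=
      tendsto_const_div_atTop_nhds_zero_nat (M : ℝ)
    have h3 := h1.add h2
    rw [add_zero] at h3
    refine h3.congr fun q => ?_
    simp only [u]
    push_cast
    rw [add_div]
  have hl : Filter.Tendsto (fun q => f (u q)) Filter.atTop (nhds (f x)) := (hf.tendsto x).comp hu
  have hr : Filter.Tendsto (fun q => p.eval ((u q : ℝ) : ℂ)) Filter.atTop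
      (nhds (p.eval ((x : ℝ) : ℂ))) := by
    have hc : Continuous fun y : ℝ≥0 => p.eval ((y : ℝ) : ℂ) :=
      p.continuous.comp (Complex.continuous_ofReal.comp NNReal.continuous_coe)
    exact (hc.tendsto x).comp hu
  refine tendsto_nhds_unique (hl.congr' ?_) hr
  filter_upwards [Filter.eventually_ge_atTop 1] with q hq
  exact hgrid q hq _ (Nat.le_add_left M _)

/-- For a polytope `K = conv t`, the values of `φ` at the multiples of `a • K` are eventually
polynomial: `K` is the linear image of the standard simplex in `ℝ^t`, and
`IsCutFunctional.simplexSlice_polynomial` applies to the pullback of `φ` to `ℝ^t`. -/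
theorem exists_polynomial_grid_of_polytope {V : Type*} [NormedAddCommGroup V] [NormedSpace ℝ V]
    {φ : ConvexBody V → ℂ} (hφ : MemVal φ) (K : ConvexBody V) {t : Set V} (ht : t.Finite)
    (hK : (K : Set V) = convexHull ℝ t) :
    ∃ M : ℕ, ∀ a : ℝ≥0, ∃ p : Polynomial ℂ, ∀ m : ℕ, M ≤ m →
      φ (((m : ℝ≥0) * a) • K) = p.eval (m : ℂ) := by
  classical
  let _ := ht.fintype
  rw [ht.convexHull_eq_image] at hK
  set A : (t → ℝ) →ₗ[ℝ] V := ∑ x : t, (LinearMap.proj (R := ℝ) x).smulRight x.1 with hA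
  refine ⟨Fintype.card t + 1, fun a => ?_⟩
  obtain ⟨p, hp⟩ := (isCutFunctional_pullback hφ ((a : ℝ) • A)).simplexSlice_polynomial
    (Fintype.card t) ∅ ∅ (Finset.disjoint_empty_left _) (by simp)
  refine ⟨p, fun m hm => ?_⟩
  have hm0 : (m : ℝ) ≠ 0 := by exact_mod_cast (by omega : m ≠ 0)
  rw [← hp m hm, ← bodyExt_coe φ]
  congr 1
  rw [ConvexBody.coe_smul', hK]
  ext v
  constructor
  · rintro ⟨_, ⟨x, ⟨hx0, hx1⟩, rfl⟩, rfl⟩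
    refine ⟨(m : ℝ) • x, ⟨fun i => ?_, ?_, by simp, by simp⟩, ?_⟩
    · have := hx0 i
      simp only [Pi.smul_apply, smul_eq_mul]
      positivity
    · simp [← Finset.mul_sum, hx1]
    · change (a : ℝ) • A ((m : ℝ) • x) = ((m : ℝ≥0) * a) • A x
      rw [map_smul, smul_smul, NNReal.smul_def]
      push_cast
      rw [mul_comm]
  · rintro ⟨x, ⟨hx0, hx1, -, -⟩, rfl⟩
    refine ⟨A ((m : ℝ)⁻¹ • x), ⟨(m : ℝ)⁻¹ • x, ⟨fun i => ?_, ?_⟩, rfl⟩, ?_⟩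
    · have := hx0 i
      simp only [Pi.smul_apply, smul_eq_mul]
      positivity
    · simp [← Finset.mul_sum, hx1, hm0]
    · change ((m : ℝ≥0) * a) • A ((m : ℝ)⁻¹ • x) = (a : ℝ) • A x
      rw [map_smul, NNReal.smul_def, smul_smul]
      push_cast
      congr 1
      field_simp

/-- The polynomial found by pulling back to a simplex could have degree up to the number of vertices
minus one; the growth bound `exists_growth_bound` reduces this to the dimension. -/
theorem exists_polynomial_of_polytope {V : Type*} [NormedAddCommGroup V] [NormedSpace ℝ V]
    [FiniteDimensional ℝ V] {φ : ConvexBody V → ℂ} (hφ : MemVal φ) (K : ConvexBody V) {t : Set V}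
    (ht : t.Finite) (hK : (K : Set V) = convexHull ℝ t) :
    ∃ p : Polynomial ℂ, p.natDegree ≤ Module.finrank ℝ V ∧
      ∀ c : ℝ≥0, φ (c • K) = p.eval ((c : ℝ) : ℂ) := by
  obtain ⟨M, hM⟩ := exists_polynomial_grid_of_polytope hφ K ht hK
  obtain ⟨p, hp⟩ := exists_polynomial_of_grids (f := fun c => φ (c • K))
    (hφ.2.2.comp (continuous_smul_body_left K)) M hM
  refine ⟨p, ?_, hp⟩
  obtain ⟨C₀, hC₀⟩ := exists_growth_bound hφ K
  refine natDegree_le_of_growth (C₀ := C₀) fun m hm => ?_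
  have := hC₀ m hm
  rw [hp] at this
  simpa using this

/-! ### Interpolation and extraction of the coefficients -/

theorem memVal_comp_smul {V : Type*} [NormedAddCommGroup V] [NormedSpace ℝ V]
    {φ : ConvexBody V → ℂ} (hφ : MemVal φ) (c : ℝ≥0) : MemVal fun K => φ (c • K) := by
  refine ⟨fun A B C D hC hD => ?_, fun K x => ?_, hφ.2.2.comp (continuous_smul_body c)⟩
  · by_cases hc : c = 0
    · subst hc
      simp
    · refine hφ.1 _ _ _ _ ?_ ?_
      · simp only [ConvexBody.coe_smul', hC, Set.smul_set_union]
      · simp only [ConvexBody.coe_smul', hD]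
        exact Set.smul_set_inter₀ hc
  · have : c • (K + ConvexBody.singletonBody x) =
        c • K + ConvexBody.singletonBody (c • x) := by
      rw [smul_add]
      congr 1
      ext1
      simp [ConvexBody.singletonBody]
    simp only [this]
    exact hφ.2.1 _ _

theorem memVal_sum {V : Type*} [NormedAddCommGroup V] [NormedSpace ℝ V] {κ : Type*}
    (s : Finset κ) (φ : κ → ConvexBody V → ℂ) (hφ : ∀ i, MemVal (φ i)) (w : κ → ℂ) :
    MemVal fun K => ∑ i ∈ s, φ i K * w i := by
  refine ⟨fun A B C D hC hD => ?_, fun K x => ?_, ?_⟩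
  · rw [← Finset.sum_add_distrib, ← Finset.sum_sub_distrib]
    refine Finset.sum_congr rfl fun i _ => ?_
    rw [(hφ i).1 A B C D hC hD]
    ring
  · exact Finset.sum_congr rfl fun i _ => by rw [(hφ i).2.1 K x]
  · exact continuous_finsetSum _ fun i _ => (hφ i).2.2.mul continuous_const

open Polynomial in
theorem coeffs_eq_of_eval_natCast {n : ℕ} {a b : Fin n → ℂ}
    (h : ∀ m : ℕ, ∑ i : Fin n, (m : ℂ) ^ (i : ℕ) * a i = ∑ i : Fin n, (m : ℂ) ^ (i : ℕ) * b i) : a = b := by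
  have hcoeff : ∀ (a : Fin n → ℂ) (k : Fin n),
      (∑ i : Fin n, C (a i) * X ^ (i : ℕ) : ℂ[X]).coeff k = a k := by
    intro a k
    simp [finsetSum_coeff, coeff_X_pow, Fin.val_inj]
  have heq : (∑ i : Fin n, C (a i) * X ^ (i : ℕ) : ℂ[X]) = ∑ i : Fin n, C (b i) * X ^ (i : ℕ) := by
    refine eq_of_infinite_eval_eq _ _
      (Set.Infinite.mono ?_ (Set.infinite_range_of_injective (Nat.cast_injective (R := ℂ))))
    rintro _ ⟨m, rfl⟩
    change eval (m : ℂ) _ = eval (m : ℂ) _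
    simp only [eval_finsetSum, eval_mul, eval_C, eval_pow, eval_X]
    exact (Finset.sum_congr rfl fun i _ => mul_comm _ _).trans
      ((h m).trans (Finset.sum_congr rfl fun i _ => mul_comm _ _))
  funext k
  rw [← hcoeff a k, heq, hcoeff b k]

/-- Lagrange interpolation at the nodes `0, …, n`. For polytopes this holds because `c ↦ φ (c • K)`
is a polynomial of degree at most `n`; both sides are continuous in `K`, and polytopes are dense. -/
theorem interpolation_formula {V : Type*} [NormedAddCommGroup V] [NormedSpace ℝ V]
    [FiniteDimensional ℝ V] {φ : ConvexBody V → ℂ} (hφ : MemVal φ) (K : ConvexBody V) (c : ℝ≥0) :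
    φ (c • K) = ∑ i ∈ Finset.range (Module.finrank ℝ V + 1), φ ((i : ℝ≥0) • K) *
      (Lagrange.basis (Finset.range (Module.finrank ℝ V + 1)) (fun j : ℕ => (j : ℂ)) i).eval
        ((c : ℝ) : ℂ) := by
  have hright : Continuous fun K : ConvexBody V =>
      ∑ i ∈ Finset.range (Module.finrank ℝ V + 1), φ ((i : ℝ≥0) • K) *
        (Lagrange.basis (Finset.range (Module.finrank ℝ V + 1)) (fun j : ℕ => (j : ℂ)) i).eval
          ((c : ℝ) : ℂ) :=
    continuous_finsetSum _ fun i _ =>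
      (hφ.2.2.comp (continuous_smul_body (i : ℝ≥0))).mul continuous_const
  refine congrFun (Continuous.ext_on (f := fun K => φ (c • K)) dense_polytopes
    (hφ.2.2.comp (continuous_smul_body c)) hright ?_) K
  rintro K ⟨t, ht, hK⟩
  obtain ⟨p, hdeg, hp⟩ := exists_polynomial_of_polytope hφ K ht hK
  have hint := Lagrange.eq_interpolate_of_eval_eq (f := p)
    (s := Finset.range (Module.finrank ℝ V + 1)) (v := fun j : ℕ => (j : ℂ))
    (fun i : ℕ => φ ((i : ℝ≥0) • K)) Nat.cast_injective.injOn (by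
      rw [Finset.card_range]
      refine lt_of_le_of_lt Polynomial.degree_le_natDegree ?_
      exact_mod_cast Nat.lt_succ_of_le hdeg) (fun i _ => by
      rw [hp]
      simp)
  change φ (c • K) = _
  rw [hp, hint, Lagrange.interpolate_apply, Polynomial.eval_finsetSum]
  simp

/-- **McMullen's theorem for a single body.** For `φ ∈ Val(V)` and `K ∈ K(V)` the function
`λ ↦ φ(λ K)`, `λ ≥ 0`, is a polynomial of degree at most `n = dim V`:
`φ(λ K) = φ_0(K) + λ φ_1(K) + ⋯ + λ^n φ_n(K)`, where each coefficient functional `φ_i` is a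
translation invariant continuous valuation homogeneous of degree `i`. -/
theorem mcmullen_single_body {V : Type*} [NormedAddCommGroup V] [NormedSpace ℝ V]
    [FiniteDimensional ℝ V]
    (φ : ConvexBody V → ℂ) (hφ : MemVal φ) :
    ∃ ψ : Fin (Module.finrank ℝ V + 1) → (ConvexBody V → ℂ),
      (∀ (K : ConvexBody V) (lam : ℝ≥0),
        φ (lam • K) = ∑ i : Fin (Module.finrank ℝ V + 1), ((lam : ℝ) : ℂ) ^ (i : ℕ) * ψ i K) ∧
      (∀ i, MemVal (ψ i) ∧ IsHomogeneousVal (ψ i) (i : ℕ)) := by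
  classical
  set n := Module.finrank ℝ V with hn
  let L : ℕ → Polynomial ℂ := Lagrange.basis (Finset.range (n + 1)) fun j : ℕ => (j : ℂ)
  let ψ : Fin (n + 1) → ConvexBody V → ℂ := fun j K =>
    ∑ i ∈ Finset.range (n + 1), φ ((i : ℝ≥0) • K) * (L i).coeff j
  have hexp : ∀ (K : ConvexBody V) (lam : ℝ≥0),
      φ (lam • K) = ∑ i : Fin (n + 1), ((lam : ℝ) : ℂ) ^ (i : ℕ) * ψ i K := by
    intro K lam
    rw [interpolation_formula hφ K lam]
    simp only [ψ, Finset.mul_sum]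
    rw [Finset.sum_comm]
    refine Finset.sum_congr rfl fun i hi => ?_
    have hdeg : (L i).natDegree < n + 1 := by
      rw [Lagrange.natDegree_basis Nat.cast_injective.injOn hi, Finset.card_range]
      omega
    change _ * (L i).eval _ = _
    rw [Polynomial.eval_eq_sum_range' hdeg, Finset.mul_sum, Finset.sum_range]
    exact Finset.sum_congr rfl fun j _ => by ring
  refine ⟨ψ, hexp, fun i => ⟨?_, fun c K => ?_⟩⟩
  · exact memVal_sum _ (fun (i : ℕ) K => φ ((i : ℝ≥0) • K))
      (fun i => memVal_comp_smul hφ (i : ℝ≥0)) _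
  · have h := coeffs_eq_of_eval_natCast (a := fun i => ψ i (c • K))
      (b := fun i : Fin (n + 1) => ((c : ℝ) : ℂ) ^ (i : ℕ) * ψ i K) fun m => by
        have h1 := hexp (c • K) m
        have h2 := hexp K (m * c)
        rw [smul_smul, h2] at h1
        push_cast at h1
        rw [← h1]
        exact Finset.sum_congr rfl fun j _ => by ring
    exact congrFun h i
end
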